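/- Let k be a field of characteristic p > 0, I an infinitesimal group scheme over k, X a scheme of finite type over k with an I-action, φ : X → X/I the categorical quotient, and ψ : X/I → X^{(p^n)} the factorization of F^n_{X/k} through φ, for an integer n ≥ h(I). For any line bundle L on X, the sheaf M := ψ^*(L^{(p^n)}) is a line bundle on X/I with φ^*(M) ≅ L^{⊗ p^n}; moreover, L is ample if and only if M is ample. -/

import Mathlib

open AlgebraicGeometry CategoryTheory CategoryTheory.Limits Opposite

universe u

noncomputable section

/-- The spectrum of the field `k`, the base of all schemes considered. -/
abbrev Spk (k : Type u) [Field k] : Scheme.{u} := Spec (CommRingCat.of k)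

/-- A scheme over the field `k`: a scheme together with a structure morphism to `Spec k`. -/
structure SchemeOver (k : Type u) [Field k] : Type (u + 1) where
  carrier : Scheme.{u}
  str : carrier ⟶ Spk k

variable (k : Type u) [Field k]

/-- A group scheme over `k`, presented via its functor of points: for every scheme `T`
and every pair of `T`-points lying over the same `T`-point of `Spec k`, a product point,
together with unit and inverse, satisfying the group axioms functorially. -/
structure GroupSchemeOver extends SchemeOver k where
  mul : ∀ {T : Scheme.{u}} (a b : T ⟶ carrier), a ≫ str = b ≫ str → (T ⟶ carrier)
  one : Spk k ⟶ carrier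
  inv : ∀ {T : Scheme.{u}}, (T ⟶ carrier) → (T ⟶ carrier)
  mul_str : ∀ {T : Scheme.{u}} (a b : T ⟶ carrier) (h), mul a b h ≫ str = a ≫ str
  one_str : one ≫ str = 𝟙 (Spk k)
  inv_str : ∀ {T : Scheme.{u}} (a : T ⟶ carrier), inv a ≫ str = a ≫ str
  mul_natural : ∀ {T' T : Scheme.{u}} (g : T' ⟶ T) (a b : T ⟶ carrier) (h h'),
    g ≫ mul a b h = mul (g ≫ a) (g ≫ b) h'
  inv_natural : ∀ {T' T : Scheme.{u}} (g : T' ⟶ T) (a : T ⟶ carrier),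
    g ≫ inv a = inv (g ≫ a)
  mul_assoc : ∀ {T : Scheme.{u}} (a b c : T ⟶ carrier) (h₁ h₂ h₃ h₄),
    mul (mul a b h₁) c h₂ = mul a (mul b c h₃) h₄
  one_mul : ∀ {T : Scheme.{u}} (a : T ⟶ carrier) (h), mul (a ≫ str ≫ one) a h = a
  mul_one : ∀ {T : Scheme.{u}} (a : T ⟶ carrier) (h), mul a (a ≫ str ≫ one) h = a
  inv_mul : ∀ {T : Scheme.{u}} (a : T ⟶ carrier) (h), mul (inv a) a h = a ≫ str ≫ one

variable {k}

theorem GroupSchemeOver.mul_congr (G : GroupSchemeOver k) {T : Scheme.{u}}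
    {a a' b b' : T ⟶ G.carrier} (ha : a = a') (hb : b = b') (h h') :
    G.mul a b h = G.mul a' b' h' := by subst ha; subst hb; rfl

/-- A homomorphism of group schemes over `k`. -/
structure GroupHom (G H : GroupSchemeOver k) where
  hom : G.carrier ⟶ H.carrier
  hom_str : hom ≫ H.str = G.str
  hom_one : G.one ≫ hom = H.one
  hom_mul : ∀ {T : Scheme.{u}} (a b : T ⟶ G.carrier) (h h'),
    G.mul a b h ≫ hom = H.mul (a ≫ hom) (b ≫ hom) h'

/-- An action of a group scheme `G` over `k` on a scheme `X` over `k`, presented via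
its functor of points. -/
structure ActionOver (G : GroupSchemeOver k) (X : SchemeOver k) where
  act : ∀ {T : Scheme.{u}} (g : T ⟶ G.carrier) (x : T ⟶ X.carrier),
    g ≫ G.str = x ≫ X.str → (T ⟶ X.carrier)
  act_str : ∀ {T : Scheme.{u}} (g : T ⟶ G.carrier) (x : T ⟶ X.carrier) (h),
    act g x h ≫ X.str = x ≫ X.str
  act_natural : ∀ {T' T : Scheme.{u}} (f : T' ⟶ T) (g : T ⟶ G.carrier)
    (x : T ⟶ X.carrier) (h h'), f ≫ act g x h = act (f ≫ g) (f ≫ x) h'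
  one_act : ∀ {T : Scheme.{u}} (x : T ⟶ X.carrier) (h), act (x ≫ X.str ≫ G.one) x h = x
  mul_act : ∀ {T : Scheme.{u}} (g g' : T ⟶ G.carrier) (x : T ⟶ X.carrier) (h₁ h₂ h₃ h₄),
    act (G.mul g g' h₁) x h₂ = act g (act g' x h₃) h₄

theorem ActionOver.act_congr {G : GroupSchemeOver k} {X : SchemeOver k}
    (α : ActionOver G X) {T : Scheme.{u}} {g g' : T ⟶ G.carrier} {x x' : T ⟶ X.carrier}
    (hg : g = g') (hx : x = x') (h h') : α.act g x h = α.act g' x' h' := by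
  subst hg; subst hx; rfl

/-- The action of a group scheme on itself by left translations. -/
def GroupSchemeOver.selfAction (G : GroupSchemeOver k) : ActionOver G G.toSchemeOver where
  act g x h := G.mul g x h
  act_str g x h := (G.mul_str g x h).trans h
  act_natural f g x h h' := G.mul_natural f g x h h'
  one_act x h := G.one_mul x h
  mul_act g g' x h₁ h₂ h₃ h₄ := G.mul_assoc g g' x h₁ h₂ h₃ h₄

/-- Restriction of an action along a homomorphism of group schemes. -/
def ActionOver.res {G H : GroupSchemeOver k} {X : SchemeOver k} (φ : GroupHom H G)
    (α : ActionOver G X) : ActionOver H X where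
  act g x h := α.act (g ≫ φ.hom) x (by rw [Category.assoc, φ.hom_str, h])
  act_str g x h := α.act_str _ _ _
  act_natural f g x h h' := by
    refine (α.act_natural f (g ≫ φ.hom) x _ ?_).trans (α.act_congr ?_ rfl _ _)
    · simp only [Category.assoc, φ.hom_str, ← h']
    · simp only [Category.assoc]
  one_act x h := by
    refine (α.act_congr ?_ rfl _ ?_).trans (α.one_act x ?_)
    · simp only [Category.assoc, φ.hom_one]
    · simp only [Category.assoc, G.one_str, Category.comp_id]
    · simp only [Category.assoc, G.one_str, Category.comp_id]
  mul_act g g' x h₁ h₂ h₃ h₄ := by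
    have hg : g ≫ H.str = x ≫ X.str := (H.mul_str g g' h₁).symm.trans h₂
    have hg' : g' ≫ H.str = x ≫ X.str := h₁.symm.trans hg
    have p1 : (g ≫ φ.hom) ≫ G.str = (g' ≫ φ.hom) ≫ G.str := by
      simp only [Category.assoc, φ.hom_str]; exact h₁
    have p3 : (g' ≫ φ.hom) ≫ G.str = x ≫ X.str := by
      simp only [Category.assoc, φ.hom_str]; exact hg'
    refine (α.act_congr (φ.hom_mul g g' h₁ p1) rfl _ ?_).trans
      (α.mul_act (g ≫ φ.hom) (g' ≫ φ.hom) x p1 ?_ p3 ?_)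
    · rw [G.mul_str]
      simp only [Category.assoc, φ.hom_str]; exact hg
    · rw [G.mul_str]
      simp only [Category.assoc, φ.hom_str]; exact hg
    · rw [α.act_str]
      simp only [Category.assoc, φ.hom_str]; exact hg
/-! ### Vector bundles and line bundles, geometrically -/

/-- The data underlying a (geometric) vector bundle on a scheme `X`: a total space `π : tot ⟶ X`
together with a fiberwise `Γ(T, ⊤)`-module structure on the `T`-points of `tot` over a fixed
`T`-point of `X`, functorially in `T`. -/
structure VecBundleData (X : Scheme.{u}) : Type (u + 1) where
  tot : Scheme.{u}
  π : tot ⟶ X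
  zero : X ⟶ tot
  zero_π : zero ≫ π = 𝟙 X
  add : ∀ {T : Scheme.{u}} (a b : T ⟶ tot), a ≫ π = b ≫ π → (T ⟶ tot)
  smul : ∀ {T : Scheme.{u}} (f : Γ(T, ⊤)) (a : T ⟶ tot), T ⟶ tot
  add_π : ∀ {T : Scheme.{u}} (a b : T ⟶ tot) (h), add a b h ≫ π = a ≫ π
  smul_π : ∀ {T : Scheme.{u}} (f : Γ(T, ⊤)) (a : T ⟶ tot), smul f a ≫ π = a ≫ π
  add_natural : ∀ {T' T : Scheme.{u}} (g : T' ⟶ T) (a b : T ⟶ tot) (h h'),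
    g ≫ add a b h = add (g ≫ a) (g ≫ b) h'
  smul_natural : ∀ {T' T : Scheme.{u}} (g : T' ⟶ T) (f : Γ(T, ⊤)) (a : T ⟶ tot),
    g ≫ smul f a = smul (g.appTop f) (g ≫ a)
  add_comm : ∀ {T : Scheme.{u}} (a b : T ⟶ tot) (h h'), add a b h = add b a h'
  add_assoc : ∀ {T : Scheme.{u}} (a b c : T ⟶ tot) (h₁ h₂ h₃ h₄),
    add (add a b h₁) c h₂ = add a (add b c h₃) h₄
  zero_add : ∀ {T : Scheme.{u}} (a : T ⟶ tot) (h), add ((a ≫ π) ≫ zero) a h = a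
  one_smul : ∀ {T : Scheme.{u}} (a : T ⟶ tot), smul 1 a = a
  mul_smul : ∀ {T : Scheme.{u}} (f g : Γ(T, ⊤)) (a : T ⟶ tot), smul (f * g) a = smul f (smul g a)
  smul_add : ∀ {T : Scheme.{u}} (f : Γ(T, ⊤)) (a b : T ⟶ tot) (h h'),
    smul f (add a b h) = add (smul f a) (smul f b) h'
  add_smul : ∀ {T : Scheme.{u}} (f g : Γ(T, ⊤)) (a : T ⟶ tot) (h),
    smul (f + g) a = add (smul f a) (smul g a) h
  zero_smul : ∀ {T : Scheme.{u}} (a : T ⟶ tot), smul 0 a = (a ≫ π) ≫ zero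
  smul_zero : ∀ {T : Scheme.{u}} (f : Γ(T, ⊤)) (x : T ⟶ X), smul f (x ≫ zero) = x ≫ zero

namespace VecBundleData

variable {X : Scheme.{u}} (E : VecBundleData X)

theorem add_congr {T : Scheme.{u}} {a a' b b' : T ⟶ E.tot} (ha : a = a') (hb : b = b')
    (h h') : E.add a b h = E.add a' b' h' := by subst ha; subst hb; rfl

/-- The fiber of a vector bundle over a `T`-point of the base. -/
abbrev Fiber {T : Scheme.{u}} (x : T ⟶ X) : Type u := { a : T ⟶ E.tot // a ≫ E.π = x }

instance fiberZero {T : Scheme.{u}} (x : T ⟶ X) : Zero (E.Fiber x) :=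
  ⟨⟨x ≫ E.zero, by rw [Category.assoc, E.zero_π, Category.comp_id]⟩⟩

instance fiberAdd {T : Scheme.{u}} (x : T ⟶ X) : Add (E.Fiber x) :=
  ⟨fun a b => ⟨E.add a.1 b.1 (a.2.trans b.2.symm), (E.add_π _ _ _).trans a.2⟩⟩

instance fiberSMul {T : Scheme.{u}} (x : T ⟶ X) : SMul Γ(T, ⊤) (E.Fiber x) :=
  ⟨fun f a => ⟨E.smul f a.1, (E.smul_π _ _).trans a.2⟩⟩

@[simp] theorem coe_fiber_zero {T : Scheme.{u}} (x : T ⟶ X) :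
    ((0 : E.Fiber x) : T ⟶ E.tot) = x ≫ E.zero := rfl

@[simp] theorem coe_fiber_add {T : Scheme.{u}} (x : T ⟶ X) (a b : E.Fiber x) :
    ((a + b : E.Fiber x) : T ⟶ E.tot) = E.add a.1 b.1 (a.2.trans b.2.symm) := rfl

@[simp] theorem coe_fiber_smul {T : Scheme.{u}} (x : T ⟶ X) (f : Γ(T, ⊤)) (a : E.Fiber x) :
    ((f • a : E.Fiber x) : T ⟶ E.tot) = E.smul f a.1 := rfl

instance {T : Scheme.{u}} (x : T ⟶ X) : AddCommMonoid (E.Fiber x) where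
  add_assoc a b c := Subtype.ext (E.add_assoc _ _ _ _ _ _ _)
  add_comm a b := Subtype.ext (E.add_comm _ _ _ _)
  zero_add a := Subtype.ext (by
    have hz : ((a.1 ≫ E.π) ≫ E.zero) ≫ E.π = a.1 ≫ E.π := by
      rw [Category.assoc, E.zero_π, Category.comp_id]
    show E.add (x ≫ E.zero) a.1 _ = a.1
    exact (E.add_congr (by rw [a.2]) rfl _ hz).trans (E.zero_add a.1 hz))
  add_zero a := Subtype.ext (by
    have hz : ((a.1 ≫ E.π) ≫ E.zero) ≫ E.π = a.1 ≫ E.π := by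
      rw [Category.assoc, E.zero_π, Category.comp_id]
    have hz' : (x ≫ E.zero) ≫ E.π = a.1 ≫ E.π := by
      rw [Category.assoc, E.zero_π, Category.comp_id, a.2]
    show E.add a.1 (x ≫ E.zero) _ = a.1
    exact (E.add_comm _ _ _ hz').trans
      ((E.add_congr (by rw [a.2]) rfl _ hz).trans (E.zero_add a.1 hz)))
  nsmul := nsmulRec
  nsmul_zero _ := rfl
  nsmul_succ _ _ := rfl

instance {T : Scheme.{u}} (x : T ⟶ X) : Module Γ(T, ⊤) (E.Fiber x) where
  one_smul a := Subtype.ext (E.one_smul a.1)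
  mul_smul f g a := Subtype.ext (E.mul_smul f g a.1)
  smul_zero f := Subtype.ext (E.smul_zero f x)
  smul_add f a b := Subtype.ext (E.smul_add f a.1 b.1 _ _)
  add_smul f g a := Subtype.ext (E.add_smul f g a.1 _)
  zero_smul a := Subtype.ext ((E.zero_smul a.1).trans (by rw [a.2]; rfl))

/-- A family of `n` local sections of `E` over an open subset `U` is a frame if every point
of the total space over `U` is, in a unique way, a linear combination of these sections. -/
def IsFrame {n : ℕ} (U : X.Opens) (s : Fin n → (U.toScheme ⟶ E.tot)) : Prop :=
  ∃ hs : ∀ i, s i ≫ E.π = U.ι,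
    ∀ {T : Scheme.{u}} (x : T ⟶ U.toScheme),
      Function.Bijective (fun f : Fin n → Γ(T, ⊤) =>
        (∑ i, f i • (⟨x ≫ s i, by rw [Category.assoc, hs i]⟩ : E.Fiber (x ≫ U.ι))))

/-- A family of `n` global sections of `E` is a global frame if every point of the total
space is, in a unique way, a linear combination of these sections. -/
def IsGlobalFrame {n : ℕ} (s : Fin n → (X ⟶ E.tot)) : Prop :=
  ∃ hs : ∀ i, s i ≫ E.π = 𝟙 X,
    ∀ {T : Scheme.{u}} (x : T ⟶ X),
      Function.Bijective (fun f : Fin n → Γ(T, ⊤) =>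
        (∑ i, f i • (⟨x ≫ s i, by rw [Category.assoc, hs i, Category.comp_id]⟩ : E.Fiber x)))

end VecBundleData

/-- A (geometric) vector bundle of rank `n` on `X`: bundle data which is locally trivial,
i.e. admits local frames around every point of `X`. -/
structure VecBundle (n : ℕ) (X : Scheme.{u}) extends VecBundleData X where
  locTriv : ∀ x : X, ∃ (U : X.Opens) (s : Fin n → (U.toScheme ⟶ tot)),
    x ∈ U ∧ toVecBundleData.IsFrame U s

/-- A (geometric) line bundle on a scheme. -/
abbrev LineBundle (X : Scheme.{u}) := VecBundle 1 X

/-- A morphism of total spaces of vector bundles over `X` is linear if it commutes with the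
projections, the fiberwise additions and the fiberwise scalar multiplications. -/
def IsLinearHom {X : Scheme.{u}} (E F : VecBundleData X) (φ : E.tot ⟶ F.tot) : Prop :=
  (φ ≫ F.π = E.π) ∧
  (∀ {T : Scheme.{u}} (a b : T ⟶ E.tot) (h h'), E.add a b h ≫ φ = F.add (a ≫ φ) (b ≫ φ) h') ∧
  (∀ {T : Scheme.{u}} (f : Γ(T, ⊤)) (a : T ⟶ E.tot), E.smul f a ≫ φ = F.smul f (a ≫ φ))

/-- Two vector bundles on `X` are isomorphic if there is a linear isomorphism between them. -/
def VBIso {X : Scheme.{u}} {n m : ℕ} (E : VecBundle n X) (F : VecBundle m X) : Prop :=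
  ∃ φ : E.tot ⟶ F.tot, IsLinearHom E.toVecBundleData F.toVecBundleData φ ∧ IsIso φ

/-- `F` is a pullback of the vector bundle `E` along `g : Y ⟶ X`. -/
def IsPullbackBundle {Y X : Scheme.{u}} (g : Y ⟶ X) {n : ℕ} (E : VecBundle n X)
    (F : VecBundle n Y) : Prop :=
  ∃ τ : F.tot ⟶ E.tot,
    (τ ≫ E.π = F.π ≫ g) ∧
    (∀ {T : Scheme.{u}} (a b : T ⟶ F.tot) (h h'), F.add a b h ≫ τ = E.add (a ≫ τ) (b ≫ τ) h') ∧
    (∀ {T : Scheme.{u}} (f : Γ(T, ⊤)) (a : T ⟶ F.tot), F.smul f a ≫ τ = E.smul f (a ≫ τ)) ∧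
    (∀ {T : Scheme.{u}} (y : T ⟶ Y) (a : T ⟶ E.tot), a ≫ E.π = y ≫ g →
      ∃! b : T ⟶ F.tot, b ≫ F.π = y ∧ b ≫ τ = a)

/-- A vector bundle is trivial if it admits a global frame. -/
def IsTrivialBundle {X : Scheme.{u}} {n : ℕ} (E : VecBundle n X) : Prop :=
  ∃ s : Fin n → (X ⟶ E.tot), E.toVecBundleData.IsGlobalFrame s

/-- `N` is a tensor product of the line bundles `L` and `M`: witnessed by a fiberwise
bilinear pairing taking local frames to local frames. -/
def IsTensor {X : Scheme.{u}} (L M N : LineBundle X) : Prop :=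
  ∃ β : ∀ {T : Scheme.{u}} (a : T ⟶ L.tot) (b : T ⟶ M.tot), a ≫ L.π = b ≫ M.π → (T ⟶ N.tot),
    (∀ {T : Scheme.{u}} (a : T ⟶ L.tot) (b : T ⟶ M.tot) (h), β a b h ≫ N.π = a ≫ L.π) ∧
    (∀ {T' T : Scheme.{u}} (g : T' ⟶ T) (a : T ⟶ L.tot) (b : T ⟶ M.tot) (h h'),
      g ≫ β a b h = β (g ≫ a) (g ≫ b) h') ∧
    (∀ {T : Scheme.{u}} (a a' : T ⟶ L.tot) (b : T ⟶ M.tot) (h₁ h₂ h₃ h₄ h₅),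
      β (L.add a a' h₁) b h₂ = N.add (β a b h₃) (β a' b h₄) h₅) ∧
    (∀ {T : Scheme.{u}} (a : T ⟶ L.tot) (b b' : T ⟶ M.tot) (h₁ h₂ h₃ h₄ h₅),
      β a (M.add b b' h₁) h₂ = N.add (β a b h₃) (β a b' h₄) h₅) ∧
    (∀ {T : Scheme.{u}} (f : Γ(T, ⊤)) (a : T ⟶ L.tot) (b : T ⟶ M.tot) (h₁ h₂),
      β (L.smul f a) b h₁ = N.smul f (β a b h₂)) ∧
    (∀ {T : Scheme.{u}} (f : Γ(T, ⊤)) (a : T ⟶ L.tot) (b : T ⟶ M.tot) (h₁ h₂),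
      β a (M.smul f b) h₁ = N.smul f (β a b h₂)) ∧
    (∀ (U : X.Opens) (sL : Fin 1 → (U.toScheme ⟶ L.tot)) (sM : Fin 1 → (U.toScheme ⟶ M.tot)),
      L.toVecBundleData.IsFrame U sL → M.toVecBundleData.IsFrame U sM →
      ∀ (h : sL 0 ≫ L.π = sM 0 ≫ M.π),
        N.toVecBundleData.IsFrame (n := 1) U (fun _ => β (sL 0) (sM 0) h))

/-- `N` is an `m`-th tensor power of the line bundle `L`. -/
def IsTensorPow {X : Scheme.{u}} (L : LineBundle X) : ℕ → LineBundle X → Prop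
  | 0, N => IsTrivialBundle N
  | m + 1, N => ∃ M : LineBundle X, IsTensorPow L m M ∧ IsTensor M L N

/-- A line bundle is ample if the base is quasi-compact and quasi-separated and the
non-vanishing loci of global sections of positive tensor powers give an affine open cover. -/
def IsAmple {X : Scheme.{u}} (L : LineBundle X) : Prop :=
  CompactSpace X ∧ QuasiSeparatedSpace X ∧
  ∀ x : X, ∃ (m : ℕ), 0 < m ∧ ∃ (N : LineBundle X), IsTensorPow L m N ∧
    ∃ (s : X ⟶ N.tot), s ≫ N.π = 𝟙 X ∧
      ∃ U : X.Opens, IsAffineOpen U ∧ x ∈ U ∧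
        (U : Set X) = {y : X | s.base y ≠ N.zero.base y}
/-! ### Properties of schemes and group schemes over `k` -/

/-- An algebraic group over `k` is a group scheme of finite type over `k`. -/
def GroupSchemeOver.IsAlgebraic {k : Type u} [Field k] (G : GroupSchemeOver k) : Prop :=
  LocallyOfFiniteType G.str ∧ QuasiCompact G.str

/-- A scheme of finite type over `k`. -/
def SchemeOver.IsFiniteType {k : Type u} [Field k] (X : SchemeOver k) : Prop :=
  LocallyOfFiniteType X.str ∧ QuasiCompact X.str

/-- A variety over `k`: an integral separated scheme of finite type over `k`. -/
def SchemeOver.IsVariety {k : Type u} [Field k] (X : SchemeOver k) : Prop :=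
  IsIntegral X.carrier ∧ AlgebraicGeometry.IsSeparated X.str ∧ X.IsFiniteType

/-- A scheme is normal if all its local rings are integrally closed domains. -/
def IsNormalScheme (X : Scheme.{u}) : Prop :=
  ∀ x : X, IsDomain (X.presheaf.stalk x) ∧ IsIntegrallyClosed (X.presheaf.stalk x)

/-- The base change of a scheme over `k` to the algebraic closure of `k`. -/
def SchemeOver.geomFiber {k : Type u} [Field k] (X : SchemeOver k) : Scheme.{u} :=
  pullback X.str (Spec.map (CommRingCat.ofHom (algebraMap k (AlgebraicClosure k))))

/-- A scheme over `k` is geometrically integral if its base change to an algebraic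
closure of `k` is integral. -/
def SchemeOver.IsGeomIntegral {k : Type u} [Field k] (X : SchemeOver k) : Prop :=
  IsIntegral X.geomFiber

/-- A scheme over `k` is geometrically connected if its base change to an algebraic
closure of `k` is connected. -/
def SchemeOver.IsGeomConnected {k : Type u} [Field k] (X : SchemeOver k) : Prop :=
  ConnectedSpace X.geomFiber

/-- A scheme over `k` is geometrically irreducible if its base change to an algebraic
closure of `k` is irreducible. -/
def SchemeOver.IsGeomIrreducible {k : Type u} [Field k] (X : SchemeOver k) : Prop :=
  IrreducibleSpace X.geomFiber

/-- An open subscheme of a scheme over `k`, as a scheme over `k`. -/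
def SchemeOver.ofOpens {k : Type u} [Field k] (X : SchemeOver k) (U : X.carrier.Opens) :
    SchemeOver k :=
  ⟨U.toScheme, U.ι ≫ X.str⟩

/-- A scheme over `k` is quasi-projective if it is separated, of finite type, and carries
an ample line bundle. -/
def SchemeOver.IsQuasiProjective {k : Type u} [Field k] (X : SchemeOver k) : Prop :=
  AlgebraicGeometry.IsSeparated X.str ∧ X.IsFiniteType ∧
    ∃ L : LineBundle X.carrier, IsAmple L

/-- An open subset of `X` is stable under an action of `G` if the action preserves its
`T`-points, for all `T`. -/
def ActionOver.Stable {k : Type u} [Field k] {G : GroupSchemeOver k} {X : SchemeOver k}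
    (α : ActionOver G X) (U : X.carrier.Opens) : Prop :=
  ∀ {T : Scheme.{u}} (g : T ⟶ G.carrier) (x : T ⟶ X.carrier) (h),
    Set.range x.base ⊆ (U : Set X.carrier) →
      Set.range (α.act g x h).base ⊆ (U : Set X.carrier)

/-- A `G`-linearization of a vector bundle `E` on a `G`-scheme `X`: an action of `G` on the
total space of `E`, lifting the action on `X` and acting linearly on the fibers (equivalently,
an action of `G × 𝔾ₘ` on `E` for which the projection is equivariant and `𝔾ₘ` acts by
multiplication on the fibers). -/
structure LinearizationData {k : Type u} [Field k] {G : GroupSchemeOver k} {X : SchemeOver k}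
    (α : ActionOver G X) {n : ℕ} (E : VecBundle n X.carrier) where
  lact : ∀ {T : Scheme.{u}} (g : T ⟶ G.carrier) (e : T ⟶ E.tot),
    g ≫ G.str = (e ≫ E.π) ≫ X.str → (T ⟶ E.tot)
  lact_π : ∀ {T : Scheme.{u}} (g : T ⟶ G.carrier) (e : T ⟶ E.tot) (h h'),
    lact g e h ≫ E.π = α.act g (e ≫ E.π) h'
  lact_natural : ∀ {T' T : Scheme.{u}} (f : T' ⟶ T) (g : T ⟶ G.carrier) (e : T ⟶ E.tot) (h h'),
    f ≫ lact g e h = lact (f ≫ g) (f ≫ e) h'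
  one_lact : ∀ {T : Scheme.{u}} (e : T ⟶ E.tot) (h), lact (((e ≫ E.π) ≫ X.str) ≫ G.one) e h = e
  mul_lact : ∀ {T : Scheme.{u}} (g g' : T ⟶ G.carrier) (e : T ⟶ E.tot) (h₁ h₂ h₃ h₄),
    lact (G.mul g g' h₁) e h₂ = lact g (lact g' e h₃) h₄
  lact_add : ∀ {T : Scheme.{u}} (g : T ⟶ G.carrier) (a b : T ⟶ E.tot) (h₁ h₂ h₃ h₄ h₅),
    lact g (E.add a b h₁) h₂ = E.add (lact g a h₃) (lact g b h₄) h₅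
  lact_smul : ∀ {T : Scheme.{u}} (g : T ⟶ G.carrier) (f : Γ(T, ⊤)) (a : T ⟶ E.tot) (h₁ h₂),
    lact g (E.smul f a) h₁ = E.smul f (lact g a h₂)

/-- A vector bundle is `G`-linearized (linearizable) if it admits a linearization. -/
def ActionOver.IsLinearized {k : Type u} [Field k] {G : GroupSchemeOver k} {X : SchemeOver k}
    (α : ActionOver G X) {n : ℕ} (E : VecBundle n X.carrier) : Prop :=
  Nonempty (LinearizationData α E)

/-- Equivariance of a morphism relative to a homomorphism of group schemes. -/
def IsEquivariantRel {k : Type u} [Field k] {G H : GroupSchemeOver k} {X Y : SchemeOver k}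
    (φ : GroupHom G H) (α : ActionOver G X) (β : ActionOver H Y)
    (f : X.carrier ⟶ Y.carrier) : Prop :=
  f ≫ Y.str = X.str ∧
  ∀ {T : Scheme.{u}} (g : T ⟶ G.carrier) (x : T ⟶ X.carrier) (h h'),
    α.act g x h ≫ f = β.act (g ≫ φ.hom) (x ≫ f) h'

/-- Equivariance of a morphism of `G`-schemes. -/
def IsEquivariant {k : Type u} [Field k] {G : GroupSchemeOver k} {X Y : SchemeOver k}
    (α : ActionOver G X) (β : ActionOver G Y) (f : X.carrier ⟶ Y.carrier) : Prop :=
  f ≫ Y.str = X.str ∧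
  ∀ {T : Scheme.{u}} (g : T ⟶ G.carrier) (x : T ⟶ X.carrier) (h h'),
    α.act g x h ≫ f = β.act g (x ≫ f) h'

/-- A `T`-point of `G` acts trivially if it acts trivially on all points of `X` over `T`. -/
def ActionOver.ActsTrivially {k : Type u} [Field k] {G : GroupSchemeOver k}
    {X : SchemeOver k} (α : ActionOver G X) {T : Scheme.{u}} (g : T ⟶ G.carrier) : Prop :=
  ∀ {T' : Scheme.{u}} (t : T' ⟶ T) (x : T' ⟶ X.carrier) (h), α.act (t ≫ g) x h = x

/-- An action is almost faithful if its kernel is finite, i.e. all trivially acting points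
factor through a fixed closed subscheme of `G` which is finite over `k`. -/
def ActionOver.IsAlmostFaithful {k : Type u} [Field k] {G : GroupSchemeOver k}
    {X : SchemeOver k} (α : ActionOver G X) : Prop :=
  ∃ (K : Scheme.{u}) (ι : K ⟶ G.carrier), IsClosedImmersion ι ∧ IsFinite (ι ≫ G.str) ∧
    ∀ {T : Scheme.{u}} (g : T ⟶ G.carrier), α.ActsTrivially g → ∃ g' : T ⟶ K, g' ≫ ι = g

/-- An abelian variety over `k` is a smooth connected proper algebraic group over `k`. -/
def GroupSchemeOver.IsAbelianVariety {k : Type u} [Field k] (G : GroupSchemeOver k) : Prop :=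
  G.IsAlgebraic ∧ IsSmooth G.str ∧ ConnectedSpace G.carrier ∧ IsProper G.str
/-! ### Frobenius twists and quotients in characteristic `p` -/

/-- The morphism `Spec k ⟶ Spec k` induced by the `n`-th iterate of the Frobenius of `k`. -/
def frobSpec (k : Type u) [Field k] (p : ℕ) [Fact p.Prime] [CharP k p] (n : ℕ) :
    Spk k ⟶ Spk k :=
  Spec.map (CommRingCat.ofHom (iterateFrobenius k p n))

/-- `F : X ⟶ X` is the absolute `q`-power Frobenius endomorphism of `X`: the identity on the
underlying space, and the `q`-th power map on functions. -/
def IsAbsoluteFrobenius (X : Scheme.{u}) (q : ℕ) (F : X ⟶ X) : Prop :=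
  (∀ x : X, F.base x = x) ∧
  ∀ (U : X.Opens) (e : Opposite.op U = Opposite.op (F ⁻¹ᵁ U)) (a : Γ(X, U)),
    F.app U a = X.presheaf.map (eqToHom e) (a ^ q)

/-- Data exhibiting the `n`-th Frobenius twist `X^{(pⁿ)}` of a scheme `X` over `k` (as the base
change of `X` along the `n`-th Frobenius of `k`), together with the relative Frobenius morphism
`F^n_{X/k} : X ⟶ X^{(pⁿ)}` (the canonical factorization of the absolute Frobenius). -/
structure FrobeniusData (k : Type u) [Field k] (p : ℕ) [Fact p.Prime] [CharP k p] (n : ℕ)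
    (X : SchemeOver k) where
  tw : SchemeOver k
  pr : tw.carrier ⟶ X.carrier
  is_pullback : IsPullback pr tw.str X.str (frobSpec k p n)
  rel : X.carrier ⟶ tw.carrier
  rel_str : rel ≫ tw.str = X.str
  abs : X.carrier ⟶ X.carrier
  abs_frob : IsAbsoluteFrobenius X.carrier (p ^ n) abs
  rel_pr : rel ≫ pr = abs

/-- A group scheme over `k` is infinitesimal if it is finite and radicial over `Spec k`. -/
def GroupSchemeOver.IsInfinitesimal {k : Type u} [Field k] (I : GroupSchemeOver k) : Prop :=
  I.IsAlgebraic ∧ IsFinite I.str ∧ UniversallyInjective I.str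

/-- `n` is at least the height of the infinitesimal group scheme `I`, i.e. the `n`-th relative
Frobenius of `I` factors through the unit section of the twist (equivalently `I_n = I`). -/
def FrobKillsAt (k : Type u) [Field k] (p : ℕ) [Fact p.Prime] [CharP k p]
    (I : GroupSchemeOver k) (n : ℕ) : Prop :=
  ∀ FD : FrobeniusData k p n I.toSchemeOver,
    ∃ u : Spk k ⟶ FD.tw.carrier,
      u ≫ FD.pr = frobSpec k p n ≫ I.one ∧ u ≫ FD.tw.str = 𝟙 (Spk k) ∧
      FD.rel = I.str ≫ u

/-- `φ : X ⟶ Q` is a categorical quotient (in the category of schemes over `k`) of `X` by the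
action `α`. -/
def IsCatQuotient {k : Type u} [Field k] {I : GroupSchemeOver k} {X : SchemeOver k}
    (α : ActionOver I X) (Q : SchemeOver k) (φ : X.carrier ⟶ Q.carrier) : Prop :=
  φ ≫ Q.str = X.str ∧
  (∀ {T : Scheme.{u}} (g : T ⟶ I.carrier) (x : T ⟶ X.carrier) (h),
    α.act g x h ≫ φ = x ≫ φ) ∧
  ∀ (Z : SchemeOver k) (u : X.carrier ⟶ Z.carrier), u ≫ Z.str = X.str →
    (∀ {T : Scheme.{u}} (g : T ⟶ I.carrier) (x : T ⟶ X.carrier) (h),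
      α.act g x h ≫ u = x ≫ u) →
    ∃! v : Q.carrier ⟶ Z.carrier, φ ≫ v = u

/-- Data exhibiting the Frobenius twist `G^{(pⁿ)}` of a group scheme `G` over `k`, as a group
scheme, together with the relative Frobenius homomorphism. -/
structure TwistedGroupData (k : Type u) [Field k] (p : ℕ) [Fact p.Prime] [CharP k p] (n : ℕ)
    (G : GroupSchemeOver k) where
  tw : GroupSchemeOver k
  pr : tw.carrier ⟶ G.carrier
  is_pullback : IsPullback pr tw.str G.str (frobSpec k p n)
  pr_mul : ∀ {T : Scheme.{u}} (a b : T ⟶ tw.carrier) (h h'),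
    tw.mul a b h ≫ pr = G.mul (a ≫ pr) (b ≫ pr) h'
  rel : GroupHom G tw
  abs : G.carrier ⟶ G.carrier
  abs_frob : IsAbsoluteFrobenius G.carrier (p ^ n) abs
  rel_pr : rel.hom ≫ pr = abs

/-- Data exhibiting the Frobenius twist of an action: the induced action of `G^{(pⁿ)}` on
`X^{(pⁿ)}`, compatible with the projections and with the relative Frobenii. -/
structure TwistedActionData {k : Type u} [Field k] {p : ℕ} [Fact p.Prime] [CharP k p] {n : ℕ}
    {G : GroupSchemeOver k} {X : SchemeOver k} (α : ActionOver G X)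
    (GT : TwistedGroupData k p n G) (FD : FrobeniusData k p n X) where
  tact : ActionOver GT.tw FD.tw
  compat : ∀ {T : Scheme.{u}} (g : T ⟶ GT.tw.carrier) (x : T ⟶ FD.tw.carrier) (h h'),
    tact.act g x h ≫ FD.pr = α.act (g ≫ GT.pr) (x ≫ FD.pr) h'
  rel_equivariant : ∀ {T : Scheme.{u}} (g : T ⟶ G.carrier) (x : T ⟶ X.carrier) (h h'),
    α.act g x h ≫ FD.rel = tact.act (g ≫ GT.rel.hom) (x ≫ FD.rel) h'

/-!
Put `ρ = pr ∘ ψ : X/I ⟶ X`. Then `ρ ∘ φ` is the absolute Frobenius of `X`, and by the universal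
property of the quotient `φ ∘ ρ` is that of `X/I`, so `φ` and `ρ` are mutually inverse
homeomorphisms, and a morphism of schemes which is a homeomorphism is affine. The Frobenius
pullback of `L` is `L^{⊗ pⁿ}`: the absolute Frobenius of the total space of `L` induces a map over
`X` which is fibrewise homogeneous of degree `pⁿ` and preserves generators. Hence `φ^* M` is
`L^{⊗ pⁿ}`. Ampleness of `L` passes to `M = ρ^* L` because `ρ` is affine, and ampleness of `M`
passes to `φ^* M`, hence to its root `L`, because `φ` is affine.
-/

/-! ### The absolute Frobenius -/

theorem natCast_eq_zero_of_over {T : Scheme.{u}} (t : T ⟶ Spk k) (p : ℕ) [CharP k p] :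
    (p : Γ(T, ⊤)) = 0 := by
  let r : k →+* Γ(T, ⊤) := ((Scheme.ΓSpecIso (.of k)).inv ≫ t.appTop).hom
  rw [← map_natCast r, CharP.cast_eq_zero, map_zero]

theorem add_pow_prime_pow_of_natCast_eq_zero {R : Type*} [CommRing R] {p : ℕ} [Fact p.Prime]
    (hp : (p : R) = 0) (n : ℕ) (a b : R) : (a + b) ^ p ^ n = a ^ p ^ n + b ^ p ^ n := by
  obtain ⟨r, hr⟩ := exists_add_pow_prime_pow_eq (Fact.out : p.Prime) a b n
  rw [hr, hp, zero_mul, zero_mul, zero_mul, add_zero]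

theorem exists_isAbsoluteFrobenius {T : Scheme.{u}} {p : ℕ} [Fact p.Prime]
    (hp : (p : Γ(T, ⊤)) = 0) (n : ℕ) : ∃ F : T ⟶ T, IsAbsoluteFrobenius T (p ^ n) F := by
  let q := p ^ n
  have hq : q ≠ 0 := pow_ne_zero n (Fact.out : p.Prime).ne_zero
  have hadd (U : T.Opens) : ∀ a b : Γ(T, U), (a + b) ^ q = a ^ q + b ^ q := by
    refine add_pow_prime_pow_of_natCast_eq_zero ?_ n
    rw [← map_natCast (T.presheaf.map (homOfLE le_top).op).hom, hp, map_zero]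
  let pow (U : T.Opens) : Γ(T, U) →+* Γ(T, U) :=
    { powMonoidHom q with map_zero' := zero_pow hq, map_add' := hadd U }
  let F₀ : T.toPresheafedSpace ⟶ T.toPresheafedSpace :=
    { base := 𝟙 _
      c :=
        { app := fun U => CommRingCat.ofHom (pow U.unop)
          naturality := by
            intro U V i
            ext a
            exact (map_pow (T.presheaf.map i).hom a q).symm } }
  have hstalk (x : T) (a : T.presheaf.stalk x) : F₀.stalkMap x a = a ^ q := by
    obtain ⟨U, hxU, s, rfl⟩ := T.presheaf.exists_germ_eq a
    exact (PresheafedSpace.stalkMap_germ_apply F₀ U x hxU s).trans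
      (map_pow (T.presheaf.germ U x hxU).hom s q)
  let F : T ⟶ T := ⟨⟨F₀, fun x => ⟨fun a ha =>
    (isUnit_pow_iff hq).mp (Eq.mp (congrArg IsUnit (hstalk x a)) ha)⟩⟩⟩
  refine ⟨F, fun x => rfl, fun U e a => ?_⟩
  rw [show T.presheaf.map (eqToHom e) = 𝟙 _ from T.presheaf.map_id _]
  rfl

namespace IsAbsoluteFrobenius

variable {T X : Scheme.{u}} {q : ℕ} {F : T ⟶ T} {G : X ⟶ X}

theorem preimage_eq (hF : IsAbsoluteFrobenius T q F) (U : T.Opens) : F ⁻¹ᵁ U = U :=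
  TopologicalSpace.Opens.ext (Set.ext fun x => iff_of_eq (congrArg (· ∈ U) (hF.1 x)))

theorem appTop_apply (hF : IsAbsoluteFrobenius T q F) (a : Γ(T, ⊤)) : F.appTop a = a ^ q :=
  (hF.2 ⊤ rfl a).trans (congrArg (fun f => f (a ^ q)) (T.presheaf.map_id (op ⊤)))

theorem naturality (hF : IsAbsoluteFrobenius T q F) (hG : IsAbsoluteFrobenius X q G)
    (h : T ⟶ X) : h ≫ G = F ≫ h := by
  refine Scheme.Hom.ext (by ext x; exact (hG.1 _).trans (congrArg h (hF.1 x).symm)) fun U => ?_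
  ext a
  have hG' := hG.2 U (congrArg op (hG.preimage_eq U).symm) a
  have hF' := hF.2 (h ⁻¹ᵁ U) (congrArg op (hF.preimage_eq _).symm) (h.app U a)
  have hh := ConcreteCategory.congr_hom
    (h.naturality (eqToHom (congrArg op (hG.preimage_eq U).symm))) (a ^ q)
  change T.presheaf.map _ (h.app (G ⁻¹ᵁ U) (G.app U a)) = F.app (h ⁻¹ᵁ U) (h.app U a)
  rw [hG', hF', ← map_pow]
  refine (congrArg (T.presheaf.map _) hh).trans ?_
  exact (ConcreteCategory.congr_hom (T.presheaf.map_comp _ _) (h.app U (a ^ q))).symm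

end IsAbsoluteFrobenius

theorem comp_frobSpec {T : Scheme.{u}} (t : T ⟶ Spk k) (p : ℕ) [Fact p.Prime] [CharP k p]
    {n : ℕ} {F : T ⟶ T} (hF : IsAbsoluteFrobenius T (p ^ n) F) :
    t ≫ frobSpec k p n = F ≫ t := by
  apply ext_of_isAffine
  ext a
  have hfrob (b : k) : (frobSpec k p n).appTop ((Scheme.ΓSpecIso (.of k)).inv b) =
      (Scheme.ΓSpecIso (.of k)).inv b ^ p ^ n := by
    rw [frobSpec, ← CommRingCat.comp_apply, ← Scheme.ΓSpecIso_inv_naturality, ← map_pow]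
    rfl
  obtain ⟨b, rfl⟩ :=
    (Scheme.ΓSpecIso (.of k)).commRingCatIsoToRingEquiv.symm.surjective a
  rw [Scheme.Hom.comp_appTop, Scheme.Hom.comp_appTop, CommRingCat.comp_apply,
    CommRingCat.comp_apply, hF.appTop_apply, ← map_pow]
  exact congrArg t.appTop (hfrob b)

theorem nonempty_frobeniusData (p : ℕ) [Fact p.Prime] [CharP k p] (n : ℕ) (X : SchemeOver k) :
    Nonempty (FrobeniusData k p n X) := by
  obtain ⟨F, hF⟩ := exists_isAbsoluteFrobenius (natCast_eq_zero_of_over X.str p) n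
  exact ⟨{
    tw := ⟨pullback X.str (frobSpec k p n), pullback.snd _ _⟩
    pr := pullback.fst _ _
    is_pullback := IsPullback.of_hasPullback _ _
    rel := pullback.lift F X.str (comp_frobSpec X.str p hF).symm
    rel_str := pullback.lift_snd _ _ _
    abs := F
    abs_frob := hF
    rel_pr := pullback.lift_fst _ _ _ }⟩

/-! ### The quotient map is a homeomorphism -/

namespace IsCatQuotient

variable {I : GroupSchemeOver k} {X : SchemeOver k} {α : ActionOver I X} {Q : SchemeOver k}
  {φ : X.carrier ⟶ Q.carrier}

theorem hom_ext (h : IsCatQuotient α Q φ) (Z : SchemeOver k) {v w : Q.carrier ⟶ Z.carrier}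
    (hv : φ ≫ v ≫ Z.str = X.str) (hvw : φ ≫ v = φ ≫ w) : v = w :=
  (h.2.2 Z (φ ≫ v) (by rw [Category.assoc, hv]) fun g x hgx => by
    rw [← Category.assoc, h.2.1, Category.assoc]).unique rfl hvw.symm

-- Both sides induce the same map to the Frobenius twist of `Q` after composition with `φ`.
theorem comp_comp_eq_abs (h : IsCatQuotient α Q φ) {p : ℕ} [Fact p.Prime] [CharP k p] {n : ℕ}
    {FD : FrobeniusData k p n X} {ψ : Q.carrier ⟶ FD.tw.carrier} (hψ : φ ≫ ψ = FD.rel)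
    (FQ : FrobeniusData k p n Q) : ψ ≫ FD.pr ≫ φ = FQ.abs := by
  have hψ_str : ψ ≫ FD.tw.str = Q.str :=
    (h.hom_ext ⟨Spk k, 𝟙 _⟩ (by simp [h.1]) (by rw [h.1, reassoc_of% hψ, FD.rel_str])).symm
  have hover : (ψ ≫ FD.pr ≫ φ) ≫ Q.str = Q.str ≫ frobSpec k p n := by
    rw [Category.assoc, Category.assoc, h.1, FD.is_pullback.w, reassoc_of% hψ_str]
  have hlift : FQ.rel = FQ.is_pullback.lift (ψ ≫ FD.pr ≫ φ) Q.str hover := by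
    refine h.hom_ext FQ.tw (by rw [FQ.rel_str, h.1]) (FQ.is_pullback.hom_ext ?_ ?_)
    · rw [Category.assoc, Category.assoc, FQ.rel_pr, IsPullback.lift_fst, reassoc_of% hψ,
        reassoc_of% FD.rel_pr, FD.abs_frob.naturality FQ.abs_frob]
    · rw [Category.assoc, Category.assoc, FQ.rel_str, IsPullback.lift_snd]
  rw [← FQ.rel_pr, hlift, IsPullback.lift_fst]

theorem surjective (h : IsCatQuotient α Q φ) {p : ℕ} [Fact p.Prime] [CharP k p] {n : ℕ}
    {FD : FrobeniusData k p n X} {ψ : Q.carrier ⟶ FD.tw.carrier} (hψ : φ ≫ ψ = FD.rel) :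
    Surjective φ := by
  obtain ⟨FQ⟩ := nonempty_frobeniusData p n Q
  refine ⟨fun y => ⟨FD.pr (ψ y), ?_⟩⟩
  rw [← Scheme.Hom.comp_apply, ← Scheme.Hom.comp_apply, h.comp_comp_eq_abs hψ FQ]
  exact FQ.abs_frob.1 y

end IsCatQuotient

theorem isAffineHom_of_isHomeomorph {X Y : Scheme.{u}} (f : X ⟶ Y) (hf : IsHomeomorph f) :
    IsAffineHom f := by
  refine isAffineHom_of_forall_exists_isAffineOpen _ fun y => ?_
  obtain ⟨x, rfl⟩ := hf.surjective y
  obtain ⟨V, hV, hxV, -⟩ := exists_isAffineOpen_mem_and_subset (U := ⊤) (x := f x) trivial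
  obtain ⟨U, hU, hxU, hUV⟩ := exists_isAffineOpen_mem_and_subset (U := f ⁻¹ᵁ V) hxV
  obtain ⟨a, haU, hxa⟩ := hV.exists_basicOpen_le (V := ⟨f '' U, hf.isOpenMap _ U.2⟩)
    ⟨f x, x, hxU, rfl⟩ hxV
  have hpre : f ⁻¹ᵁ Y.basicOpen a ≤ U := by
    intro z hz
    obtain ⟨z', hz'U, hz'⟩ := haU hz
    exact hf.injective hz' ▸ hz'U
  refine ⟨Y.basicOpen a, hxa, hV.basicOpen a, ?_⟩
  rw [Scheme.preimage_basicOpen] at hpre ⊢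
  rw [← inf_eq_right.mpr hpre, ← Scheme.basicOpen_res _ _ (homOfLE hUV).op]
  exact hU.basicOpen _

/-! ### Gluing morphisms and functions -/

theorem hom_ext_of_local {T Z : Scheme.{u}} {f g : T ⟶ Z}
    (h : ∀ y : T, ∃ U : T.Opens, y ∈ U ∧ U.ι ≫ f = U.ι ≫ g) : f = g := by
  choose U hyU hfg using h
  exact (T.openCoverOfIsOpenCover U (.mk (eq_top_iff.mpr fun y _ =>
    TopologicalSpace.Opens.mem_iSup.mpr ⟨y, hyU y⟩))).hom_ext _ _ hfg

theorem exists_hom_of_local {T Z : Scheme.{u}}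
    (C : ∀ {T' : Scheme.{u}}, (T' ⟶ T) → (T' ⟶ Z) → Prop)
    (hcomp : ∀ ⦃T'' T' : Scheme.{u}⦄ (s : T'' ⟶ T') ⦃t : T' ⟶ T⦄ ⦃c : T' ⟶ Z⦄,
      C t c → C (s ≫ t) (s ≫ c))
    (huniq : ∀ ⦃T' : Scheme.{u}⦄ ⦃t : T' ⟶ T⦄ ⦃c c' : T' ⟶ Z⦄, C t c → C t c' → c = c')
    (hex : ∀ y : T, ∃ U : T.Opens, y ∈ U ∧ ∃ c, C U.ι c) :
    ∃ c : T ⟶ Z, ∀ {T' : Scheme.{u}} {t : T' ⟶ T} {c' : T' ⟶ Z}, C t c' → t ≫ c = c' := by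
  choose U hyU c hc using hex
  let 𝒰 := T.openCoverOfIsOpenCover U (.mk (eq_top_iff.mpr fun y _ =>
    TopologicalSpace.Opens.mem_iSup.mpr ⟨y, hyU y⟩))
  have hglue (x y : T) :
      pullback.fst (U x).ι (U y).ι ≫ c x = pullback.snd (U x).ι (U y).ι ≫ c y := by
    refine huniq (hcomp _ (hc x)) ?_
    rw [pullback.condition]
    exact hcomp _ (hc y)
  have hι (y : T) : (U y).ι ≫ 𝒰.glueMorphisms c hglue = c y := 𝒰.ι_glueMorphisms c hglue y
  refine ⟨𝒰.glueMorphisms c hglue, fun {T'} t c' hc' => hom_ext_of_local fun y => ?_⟩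
  refine ⟨t ⁻¹ᵁ U (t y), hyU (t y), huniq (t := (t ⁻¹ᵁ U (t y)).ι ≫ t) ?_ (hcomp _ hc')⟩
  rw [← Category.assoc, ← morphismRestrict_ι, Category.assoc, hι]
  exact hcomp _ (hc _)

/-- Functions on `T` as morphisms to the affine line over the integers. -/
def homAffineLineEquiv (T : Scheme.{u}) :
    (T ⟶ Spec (.of (MvPolynomial PUnit.{u + 1} (ULift.{u} ℤ)))) ≃ Γ(T, ⊤) :=
  (AffineSpace.toSpecMvPolyIntEquiv PUnit.{u + 1}).trans (Equiv.funUnique _ _)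

theorem homAffineLineEquiv_comp {T' T : Scheme.{u}} (t : T' ⟶ T)
    (c : T ⟶ Spec (.of (MvPolynomial PUnit.{u + 1} (ULift.{u} ℤ)))) :
    homAffineLineEquiv T' (t ≫ c) = t.appTop (homAffineLineEquiv T c) :=
  AffineSpace.toSpecMvPolyIntEquiv_comp PUnit.{u + 1} t c PUnit.unit

theorem function_ext_of_local {T : Scheme.{u}} {f g : Γ(T, ⊤)}
    (h : ∀ y : T, ∃ U : T.Opens, y ∈ U ∧ U.ι.appTop f = U.ι.appTop g) : f = g := by
  obtain ⟨f, rfl⟩ := (homAffineLineEquiv T).surjective f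
  obtain ⟨g, rfl⟩ := (homAffineLineEquiv T).surjective g
  simp only [← homAffineLineEquiv_comp, EmbeddingLike.apply_eq_iff_eq] at h
  rw [hom_ext_of_local h]

theorem exists_function_of_local {T : Scheme.{u}}
    (C : ∀ {T' : Scheme.{u}}, (T' ⟶ T) → Γ(T', ⊤) → Prop)
    (hcomp : ∀ ⦃T'' T' : Scheme.{u}⦄ (s : T'' ⟶ T') ⦃t : T' ⟶ T⦄ ⦃f : Γ(T', ⊤)⦄,
      C t f → C (s ≫ t) (s.appTop f))
    (huniq : ∀ ⦃T' : Scheme.{u}⦄ ⦃t : T' ⟶ T⦄ ⦃f g : Γ(T', ⊤)⦄, C t f → C t g → f = g)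
    (hex : ∀ y : T, ∃ U : T.Opens, y ∈ U ∧ ∃ f, C U.ι f) :
    ∃ f : Γ(T, ⊤), ∀ {T' : Scheme.{u}} {t : T' ⟶ T} {g : Γ(T', ⊤)}, C t g → t.appTop f = g := by
  obtain ⟨c, hc⟩ := exists_hom_of_local (fun t c => C t (homAffineLineEquiv _ c))
    (fun _ _ s _ _ h => by rw [homAffineLineEquiv_comp]; exact hcomp s h)
    (fun _ _ _ _ h h' => (homAffineLineEquiv _).injective (huniq h h'))
    (fun y => by
      obtain ⟨U, hyU, f, hf⟩ := hex y
      exact ⟨U, hyU, (homAffineLineEquiv _).symm f, by rwa [Equiv.apply_symm_apply]⟩)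
  refine ⟨homAffineLineEquiv T c, fun {T'} t g hg => ?_⟩
  rw [← homAffineLineEquiv_comp, hc (c' := (homAffineLineEquiv _).symm g)
    (by rwa [Equiv.apply_symm_apply]), Equiv.apply_symm_apply]

/-! ### Generators of line bundles -/

namespace VecBundleData

variable {X : Scheme.{u}} {E : VecBundleData X}

variable (E) in
/-- A `T`-point of a bundle is a generator if, after every base change `T' ⟶ T`, it freely
generates the fibre it lies in. Over an open immersion `T ⟶ X` these are the frames of rank one. -/
def IsGenerator {T : Scheme.{u}} (e : T ⟶ E.tot) : Prop :=
  ∀ ⦃T' : Scheme.{u}⦄ (t : T' ⟶ T) (a : T' ⟶ E.tot), a ≫ E.π = (t ≫ e) ≫ E.π →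
    ∃! f : Γ(T', ⊤), E.smul f (t ≫ e) = a

namespace IsGenerator

variable {T : Scheme.{u}} {e : T ⟶ E.tot}

theorem comp (he : E.IsGenerator e) {T' : Scheme.{u}} (t : T' ⟶ T) : E.IsGenerator (t ≫ e) :=
  fun _ s a ha => by simpa only [Category.assoc] using he (s ≫ t) a (by simpa using ha)

theorem existsUnique_smul_eq (he : E.IsGenerator e) {a : T ⟶ E.tot} (ha : a ≫ E.π = e ≫ E.π) :
    ∃! f, E.smul f e = a := by
  simpa only [Category.id_comp] using he (𝟙 T) a (by rw [ha, Category.id_comp])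

theorem exists_smul_eq (he : E.IsGenerator e) {a : T ⟶ E.tot} (ha : a ≫ E.π = e ≫ E.π) :
    ∃ f, E.smul f e = a :=
  (he.existsUnique_smul_eq ha).exists

theorem smul_left_injective (he : E.IsGenerator e) : Function.Injective (E.smul · e) :=
  fun f _ h => (he.existsUnique_smul_eq (E.smul_π f e)).unique rfl h.symm

theorem of_local (h : ∀ y : T, ∃ U : T.Opens, y ∈ U ∧ E.IsGenerator (U.ι ≫ e)) :
    E.IsGenerator e := by
  have hres {S : Scheme.{u}} (s : S ⟶ T) (y : S) :
      ∃ V : S.Opens, y ∈ V ∧ E.IsGenerator (V.ι ≫ s ≫ e) := by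
    obtain ⟨U, hyU, hU⟩ := h (s y)
    exact ⟨s ⁻¹ᵁ U, hyU, by simpa only [morphismRestrict_ι_assoc] using hU.comp (s ∣_ U)⟩
  have hinj {S : Scheme.{u}} (s : S ⟶ T) {f g : Γ(S, ⊤)}
      (hfg : E.smul f (s ≫ e) = E.smul g (s ≫ e)) : f = g :=
    function_ext_of_local fun y => by
      obtain ⟨V, hyV, hV⟩ := hres s y
      refine ⟨V, hyV, hV.smul_left_injective ?_⟩
      beta_reduce
      rw [← E.smul_natural, ← E.smul_natural, hfg]
  intro T' t a ha
  have hlocal (y : T') : ∃ V : T'.Opens, y ∈ V ∧ ∃ f, E.smul f (V.ι ≫ t ≫ e) = V.ι ≫ a := by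
    obtain ⟨V, hyV, hV⟩ := hres t y
    exact ⟨V, hyV, hV.exists_smul_eq (by simp [ha])⟩
  obtain ⟨f, hf⟩ := exists_function_of_local (fun s f => E.smul f (s ≫ t ≫ e) = s ≫ a)
    (fun _ _ r s f hf => by rw [Category.assoc, ← E.smul_natural, hf, Category.assoc])
    (fun _ s f g hf hg => hinj (s ≫ t) (by rw [Category.assoc, hf, hg])) hlocal
  refine ⟨f, hom_ext_of_local fun y => ?_, fun g hg => ?_⟩
  · obtain ⟨V, hyV, g, hg⟩ := hlocal y
    exact ⟨V, hyV, by rw [E.smul_natural, hf hg, hg]⟩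
  · simpa using (hf (t := 𝟙 _) (g := g) (by simpa using hg)).symm

theorem smul_isUnit (he : E.IsGenerator e) {u : Γ(T, ⊤)} (hu : IsUnit u) :
    E.IsGenerator (E.smul u e) := by
  intro T' t a ha
  obtain ⟨v, hv⟩ := hu.map t.appTop.hom
  refine (v.mulRight.existsUnique_congr fun f => ?_).mpr
    (he t a (by rw [ha, Category.assoc, E.smul_π, Category.assoc]))
  rw [E.smul_natural, ← E.mul_smul, Units.mulRight_apply, hv]

/-- The coefficient of `a` with respect to the generator `e` of its fibre. -/
def coeff (he : E.IsGenerator e) (a : T ⟶ E.tot) (h : a ≫ E.π = e ≫ E.π) : Γ(T, ⊤) :=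
  (he.exists_smul_eq h).choose

theorem smul_coeff (he : E.IsGenerator e) (a : T ⟶ E.tot) (h) : E.smul (he.coeff a h) e = a :=
  (he.exists_smul_eq h).choose_spec

theorem coeff_eq_iff (he : E.IsGenerator e) {a : T ⟶ E.tot} {h} {f : Γ(T, ⊤)} :
    he.coeff a h = f ↔ E.smul f e = a := by
  rw [← he.smul_left_injective.eq_iff, smul_coeff, eq_comm]

theorem coeff_self (he : E.IsGenerator e) : he.coeff e rfl = 1 :=
  he.coeff_eq_iff.mpr (E.one_smul e)

theorem coeff_smul (he : E.IsGenerator e) (f : Γ(T, ⊤)) (a : T ⟶ E.tot) (h h') :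
    he.coeff (E.smul f a) h = f * he.coeff a h' := by
  rw [coeff_eq_iff, E.mul_smul, smul_coeff]

theorem coeff_mul_coeff (he : E.IsGenerator e) {e' : T ⟶ E.tot} (he' : E.IsGenerator e')
    (a : T ⟶ E.tot) (h h' h'') : he.coeff e' h * he'.coeff a h' = he.coeff a h'' := by
  rw [eq_comm, coeff_eq_iff, mul_comm, E.mul_smul, smul_coeff, smul_coeff]

theorem isUnit_coeff (he : E.IsGenerator e) {e' : T ⟶ E.tot} (he' : E.IsGenerator e') (h) :
    IsUnit (he.coeff e' h) :=
  .of_mul_eq_one (he'.coeff e h.symm) (by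
    rw [coeff_mul_coeff _ _ _ _ _ rfl, coeff_self])

theorem exists_isUnit_smul_eq (he : E.IsGenerator e) {e' : T ⟶ E.tot} (he' : E.IsGenerator e')
    (h : e' ≫ E.π = e ≫ E.π) : ∃ u : Γ(T, ⊤), IsUnit u ∧ E.smul u e = e' :=
  ⟨he.coeff e' h, he.isUnit_coeff he' h, he.smul_coeff e' h⟩

end IsGenerator

theorem bijective_sum_smul_iff {T : Scheme.{u}} {x : T ⟶ X} {e : Fin 1 → (T ⟶ E.tot)}
    (he : ∀ i, e i ≫ E.π = x) :
    Function.Bijective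
        (fun f : Fin 1 → Γ(T, ⊤) => ∑ i, f i • (⟨e i, he i⟩ : E.Fiber x)) ↔
      ∀ a, a ≫ E.π = x → ∃! f, E.smul f (e 0) = a := by
  have hsum : (fun f : Fin 1 → Γ(T, ⊤) => ∑ i, f i • (⟨e i, he i⟩ : E.Fiber x)) =
      (fun f => f • ⟨e 0, he 0⟩) ∘ Equiv.funUnique (Fin 1) Γ(T, ⊤) := by
    funext f
    exact Fin.sum_univ_one _
  rw [hsum, Function.Bijective.of_comp_iff _ (Equiv.bijective _),
    Function.bijective_iff_existsUnique, Subtype.forall]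
  simp only [Subtype.ext_iff, coe_fiber_smul]

theorem isFrame_iff {U : X.Opens} {s : Fin 1 → (U.toScheme ⟶ E.tot)} :
    E.IsFrame U s ↔ s 0 ≫ E.π = U.ι ∧ E.IsGenerator (s 0) := by
  constructor
  · rintro ⟨hs, h⟩
    exact ⟨hs 0, fun _ t a ha => (bijective_sum_smul_iff _).mp (h t) a
      (by rw [ha, Category.assoc, hs 0])⟩
  · rintro ⟨hs, h⟩
    exact ⟨Fin.forall_fin_one.mpr hs, fun x => (bijective_sum_smul_iff _).mpr fun a ha =>
      h x a (by rw [ha, Category.assoc, hs])⟩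

theorem isGlobalFrame_iff {s : Fin 1 → (X ⟶ E.tot)} :
    E.IsGlobalFrame s ↔ s 0 ≫ E.π = 𝟙 X ∧ E.IsGenerator (s 0) := by
  constructor
  · rintro ⟨hs, h⟩
    exact ⟨hs 0, fun _ t a ha => (bijective_sum_smul_iff _).mp (h t) a
      (by rw [ha, Category.assoc, hs 0, Category.comp_id])⟩
  · rintro ⟨hs, h⟩
    exact ⟨Fin.forall_fin_one.mpr hs, fun x => (bijective_sum_smul_iff _).mpr fun a ha =>
      h x a (by rw [ha, Category.assoc, hs, Category.comp_id])⟩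

end VecBundleData

open VecBundleData

namespace VecBundle

variable {X : Scheme.{u}}

theorem exists_isGenerator (L : LineBundle X) {T : Scheme.{u}} (x : T ⟶ X) (y : T) :
    ∃ U : T.Opens, y ∈ U ∧ ∃ e : U.toScheme ⟶ L.tot, e ≫ L.π = U.ι ≫ x ∧ L.IsGenerator e := by
  obtain ⟨V, s, hyV, hs⟩ := L.locTriv (x y)
  obtain ⟨hsπ, hs⟩ := isFrame_iff.mp hs
  exact ⟨x ⁻¹ᵁ V, hyV, (x ∣_ V) ≫ s 0, by rw [Category.assoc, hsπ, morphismRestrict_ι],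
    hs.comp _⟩

/-- The line bundle on bundle data which has generators locally on the base. -/
def ofIsGenerator (E : VecBundleData X)
    (h : ∀ x : X, ∃ U : X.Opens, x ∈ U ∧ ∃ e : U.toScheme ⟶ E.tot,
      e ≫ E.π = U.ι ∧ E.IsGenerator e) : LineBundle X where
  toVecBundleData := E
  locTriv x := by
    obtain ⟨U, hxU, e, heπ, he⟩ := h x
    exact ⟨U, fun _ => e, hxU, isFrame_iff.mpr ⟨heπ, he⟩⟩

end VecBundle

/-! ### Pullback bundles -/

theorem isPullback_iff_existsUnique {C : Type*} [Category C] {P X Y Z : C} {fst : P ⟶ X}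
    {snd : P ⟶ Y} {f : X ⟶ Z} {g : Y ⟶ Z} :
    IsPullback fst snd f g ↔ fst ≫ f = snd ≫ g ∧ ∀ ⦃T : C⦄ (a : T ⟶ X) (b : T ⟶ Y),
      a ≫ f = b ≫ g → ∃! l : T ⟶ P, l ≫ fst = a ∧ l ≫ snd = b := by
  refine ⟨fun h => ⟨h.w, fun T a b hab => ⟨h.lift a b hab, ⟨h.lift_fst _ _ _, h.lift_snd _ _ _⟩,
    fun l ⟨hla, hlb⟩ => h.hom_ext (by simpa using hla) (by simpa using hlb)⟩⟩,
    fun ⟨w, h⟩ => ⟨⟨w⟩, ⟨?_⟩⟩⟩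
  choose l hl hl' using fun s : PullbackCone f g => h s.fst s.snd s.condition
  exact PullbackCone.IsLimit.mk w l (fun s => (hl s).1) (fun s => (hl s).2)
    (fun s m hm hm' => hl' s m ⟨hm, hm'⟩)

/-- A morphism `τ` of total spaces, compatible with the vector space structures on the fibres,
which identifies the bundle `F` on `Y` with the pullback of the bundle `E` along `g`. -/
structure IsPullbackMap {Y X : Scheme.{u}} (g : Y ⟶ X) (E : VecBundleData X) (F : VecBundleData Y)
    (τ : F.tot ⟶ E.tot) : Prop where
  isPullback : IsPullback τ F.π E.π g
  add : ∀ {T : Scheme.{u}} (a b : T ⟶ F.tot) (h h'), F.add a b h ≫ τ = E.add (a ≫ τ) (b ≫ τ) h'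
  smul : ∀ {T : Scheme.{u}} (f : Γ(T, ⊤)) (a : T ⟶ F.tot), F.smul f a ≫ τ = E.smul f (a ≫ τ)

theorem isPullbackBundle_iff {Y X : Scheme.{u}} {g : Y ⟶ X} {n : ℕ} {E : VecBundle n X}
    {F : VecBundle n Y} :
    IsPullbackBundle g E F ↔ ∃ τ, IsPullbackMap g E.toVecBundleData F.toVecBundleData τ := by
  refine exists_congr fun τ => ⟨fun ⟨hπ, hadd, hsmul, hex⟩ => ⟨?_, hadd, hsmul⟩,
    fun ⟨hpb, hadd, hsmul⟩ => ⟨hpb.w, hadd, hsmul, fun y a h => ?_⟩⟩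
  · exact isPullback_iff_existsUnique.mpr ⟨hπ, fun T a y h => by
      simpa only [and_comm] using hex y a h⟩
  · simpa only [and_comm] using (isPullback_iff_existsUnique.mp hpb).2 a y h

namespace IsPullbackMap

variable {Y X : Scheme.{u}} {g : Y ⟶ X} {E : VecBundleData X} {F : VecBundleData Y}
  {τ : F.tot ⟶ E.tot}

theorem hom_ext (H : IsPullbackMap g E F τ) {T : Scheme.{u}} {a b : T ⟶ F.tot}
    (hπ : a ≫ F.π = b ≫ F.π) (hτ : a ≫ τ = b ≫ τ) : a = b :=
  H.isPullback.hom_ext hτ hπ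

theorem smul_eq_iff (H : IsPullbackMap g E F τ) {T : Scheme.{u}} {f : Γ(T, ⊤)}
    {a b : T ⟶ F.tot} (hπ : b ≫ F.π = a ≫ F.π) :
    F.smul f a = b ↔ E.smul f (a ≫ τ) = b ≫ τ := by
  rw [← H.smul]
  exact ⟨congrArg (· ≫ τ), H.hom_ext (by rw [F.smul_π, hπ])⟩

theorem isGenerator_iff (H : IsPullbackMap g E F τ) {T : Scheme.{u}} {e : T ⟶ F.tot} :
    E.IsGenerator (e ≫ τ) ↔ F.IsGenerator e := by
  constructor
  · intro he T' t b hb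
    simp only [H.smul_eq_iff hb, Category.assoc]
    exact he t (b ≫ τ) (by simp [H.isPullback.w, reassoc_of% hb])
  · intro he T' t a ha
    have hab : a ≫ E.π = ((t ≫ e) ≫ F.π) ≫ g := by simpa [H.isPullback.w] using ha
    obtain ⟨b, hbτ, hbπ⟩ : ∃ b, b ≫ τ = a ∧ b ≫ F.π = (t ≫ e) ≫ F.π :=
      ⟨H.isPullback.lift a _ hab, H.isPullback.lift_fst _ _ _, H.isPullback.lift_snd _ _ _⟩
    simpa only [H.smul_eq_iff hbπ, hbτ, Category.assoc] using he t b hbπ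

theorem zero_comp (H : IsPullbackMap g E F τ) : F.zero ≫ τ = g ≫ E.zero := by
  have h := H.smul 0 F.zero
  simpa [F.zero_smul, E.zero_smul, reassoc_of% F.zero_π, H.isPullback.w] using h

theorem trans (H : IsPullbackMap g E F τ) {Z : Scheme.{u}} {g' : Z ⟶ Y} {F' : VecBundleData Z}
    {τ' : F'.tot ⟶ F.tot} (H' : IsPullbackMap g' F F' τ') :
    IsPullbackMap (g' ≫ g) E F' (τ' ≫ τ) where
  isPullback := H'.isPullback.paste_horiz H.isPullback
  add a b h h' := by
    have h'' : (a ≫ τ') ≫ F.π = (b ≫ τ') ≫ F.π := by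
      simp only [Category.assoc, H'.isPullback.w, reassoc_of% h]
    rw [← Category.assoc, H'.add a b h h'', H.add _ _ _ (by simpa using h')]
    exact E.add_congr (Category.assoc _ _ _) (Category.assoc _ _ _) _ _
  smul f a := by rw [← Category.assoc, H'.smul, H.smul, Category.assoc]

end IsPullbackMap

theorem IsPullbackBundle.trans {Z Y X : Scheme.{u}} {g : Y ⟶ X} {g' : Z ⟶ Y} {n : ℕ}
    {E : VecBundle n X} {F : VecBundle n Y} {F' : VecBundle n Z} (h : IsPullbackBundle g E F)
    (h' : IsPullbackBundle g' F F') : IsPullbackBundle (g' ≫ g) E F' := by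
  obtain ⟨τ, H⟩ := isPullbackBundle_iff.mp h
  obtain ⟨τ', H'⟩ := isPullbackBundle_iff.mp h'
  exact isPullbackBundle_iff.mpr ⟨_, H.trans H'⟩

/-- The pullback of bundle data along a morphism, with the fibre product as total space. -/
def VecBundleData.baseChange {Y X : Scheme.{u}} (E : VecBundleData X) (g : Y ⟶ X) :
    VecBundleData Y where
  tot := pullback E.π g
  π := pullback.snd _ _
  zero := pullback.lift (g ≫ E.zero) (𝟙 Y) (by simp [E.zero_π])
  zero_π := pullback.lift_snd _ _ _
  add a b h := pullback.lift
    (E.add (a ≫ pullback.fst _ _) (b ≫ pullback.fst _ _)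
      (by simp [pullback.condition, reassoc_of% h]))
    (a ≫ pullback.snd _ _) (by simp [E.add_π, pullback.condition])
  smul f a := pullback.lift (E.smul f (a ≫ pullback.fst _ _)) (a ≫ pullback.snd _ _)
    (by simp [E.smul_π, pullback.condition])
  add_π a b h := pullback.lift_snd _ _ _
  smul_π f a := pullback.lift_snd _ _ _
  add_natural t a b h h' := pullback.hom_ext
    (by
      simp only [Category.assoc, pullback.lift_fst]
      rw [E.add_natural _ _ _ _ (by simp [pullback.condition, reassoc_of% h])])
    (by simp only [Category.assoc, pullback.lift_snd])
  smul_natural t f a := pullback.hom_ext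
    (by simp only [Category.assoc, pullback.lift_fst, E.smul_natural])
    (by simp only [Category.assoc, pullback.lift_snd])
  add_comm a b h h' := pullback.hom_ext
    (by simpa only [pullback.lift_fst] using E.add_comm _ _ _ _)
    (by simpa only [pullback.lift_snd] using h)
  add_assoc a b c h₁ h₂ h₃ h₄ := pullback.hom_ext
    (by simpa only [pullback.lift_fst] using E.add_assoc _ _ _ _ _ _ _)
    (by simp only [pullback.lift_snd])
  zero_add a h := by
    have hc : a ≫ pullback.fst E.π g ≫ E.π = a ≫ pullback.snd E.π g ≫ g := by
      rw [pullback.condition]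
    refine pullback.hom_ext ?_ (by rw [pullback.lift_snd, h])
    rw [pullback.lift_fst]
    refine (E.add_congr ?_ rfl _ ?_).trans (E.zero_add (a ≫ pullback.fst _ _) ?_)
    · simp only [Category.assoc, pullback.lift_fst, reassoc_of% hc]
    · simp only [Category.assoc, E.zero_π, Category.comp_id]
    · simp only [Category.assoc, E.zero_π, Category.comp_id]
  one_smul a := pullback.hom_ext
    (by rw [pullback.lift_fst, E.one_smul]) (by rw [pullback.lift_snd])
  mul_smul f f' a := pullback.hom_ext
    (by simp only [pullback.lift_fst, E.mul_smul]) (by simp only [pullback.lift_snd])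
  smul_add f a b h h' := pullback.hom_ext
    (by simpa only [pullback.lift_fst] using E.smul_add _ _ _ _ _)
    (by simp only [pullback.lift_snd])
  add_smul f f' a h := pullback.hom_ext
    (by simpa only [pullback.lift_fst] using E.add_smul _ _ _ _)
    (by simp only [pullback.lift_snd])
  zero_smul a := pullback.hom_ext
    (by simp only [Category.assoc, pullback.lift_fst, E.zero_smul, pullback.condition_assoc])
    (by simp only [Category.assoc, pullback.lift_snd, Category.comp_id])
  smul_zero f x := pullback.hom_ext
    (by simpa only [Category.assoc, pullback.lift_fst] using E.smul_zero f (x ≫ g))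
    (by simp only [pullback.lift_snd])

theorem VecBundleData.isPullbackMap_baseChange {Y X : Scheme.{u}} (E : VecBundleData X)
    (g : Y ⟶ X) : IsPullbackMap g E (E.baseChange g) (pullback.fst E.π g) where
  isPullback := IsPullback.of_hasPullback _ _
  add _ _ _ _ := pullback.lift_fst _ _ _
  smul _ _ := pullback.lift_fst _ _ _

theorem LineBundle.exists_isPullbackBundle {Y X : Scheme.{u}} (g : Y ⟶ X) (L : LineBundle X) :
    ∃ L' : LineBundle Y, IsPullbackBundle g L L' := by
  refine ⟨.ofIsGenerator (L.baseChange g) fun y => ?_,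
    isPullbackBundle_iff.mpr ⟨_, L.isPullbackMap_baseChange g⟩⟩
  obtain ⟨U, hyU, e, heπ, he⟩ := L.exists_isGenerator g y
  have hfst : pullback.lift e U.ι heπ ≫ pullback.fst L.π g = e := pullback.lift_fst _ _ _
  exact ⟨U, hyU, pullback.lift e U.ι heπ, pullback.lift_snd _ _ _,
    (L.isPullbackMap_baseChange g).isGenerator_iff.mp (hfst.symm ▸ he)⟩

/-! ### Powers and tensor powers -/

/-- `P` behaves like the `m`-th power map from `L` to its `m`-th tensor power `N`: it is fibrewise
homogeneous of degree `m` and preserves generators. -/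
structure IsPowerMap {X : Scheme.{u}} (L : VecBundleData X) (m : ℕ) (N : VecBundleData X)
    (P : L.tot ⟶ N.tot) : Prop where
  comp_π : P ≫ N.π = L.π
  smul : ∀ {T : Scheme.{u}} (f : Γ(T, ⊤)) (a : T ⟶ L.tot), L.smul f a ≫ P = N.smul (f ^ m) (a ≫ P)
  isGenerator : ∀ {T : Scheme.{u}} {e : T ⟶ L.tot}, L.IsGenerator e → N.IsGenerator (e ≫ P)

/-- `N` is an `m`-th power of `L`, as witnessed by a power map. For line bundles this is the same
as being an `m`-th tensor power, but is easier to compose and to pull back. -/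
def IsPower {X : Scheme.{u}} (L : VecBundleData X) (m : ℕ) (N : VecBundleData X) : Prop :=
  ∃ P, IsPowerMap L m N P

namespace IsPower

variable {X : Scheme.{u}} {L M N : VecBundleData X} {q m : ℕ}

theorem refl (L : VecBundleData X) : IsPower L 1 L :=
  ⟨𝟙 _, Category.id_comp _, by simp, by simp⟩

theorem trans (h : IsPower L q M) (h' : IsPower M m N) : IsPower L (q * m) N := by
  obtain ⟨P, hP⟩ := h
  obtain ⟨P', hP'⟩ := h'
  exact ⟨P ≫ P', by rw [Category.assoc, hP'.comp_π, hP.comp_π],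
    fun f a => by rw [← Category.assoc, hP.smul, hP'.smul, ← pow_mul, Category.assoc],
    fun he => by simpa using hP'.isGenerator (hP.isGenerator he)⟩

theorem baseChange {Y : Scheme.{u}} {g : Y ⟶ X} {L' N' : VecBundleData Y} {τL τN}
    (h : IsPower L m N) (hL : IsPullbackMap g L L' τL) (hN : IsPullbackMap g N N' τN) :
    IsPower L' m N' := by
  obtain ⟨P, hP⟩ := h
  obtain ⟨P', hP'τ, hP'π⟩ : ∃ P', P' ≫ τN = τL ≫ P ∧ P' ≫ N'.π = L'.π :=
    ⟨hN.isPullback.lift (τL ≫ P) L'.π (by rw [Category.assoc, hP.comp_π, hL.isPullback.w]),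
      hN.isPullback.lift_fst _ _ _, hN.isPullback.lift_snd _ _ _⟩
  refine ⟨P', hP'π, fun f a => hN.hom_ext ?_ ?_, fun {T e} he => ?_⟩
  · simp only [Category.assoc, hP'π, L'.smul_π, N'.smul_π]
  · rw [Category.assoc, hP'τ, ← Category.assoc, hL.smul, hP.smul, hN.smul, Category.assoc,
      Category.assoc, hP'τ]
  · rw [← hN.isGenerator_iff, Category.assoc, hP'τ, ← Category.assoc]
    exact hP.isGenerator (hL.isGenerator_iff.mpr he)

end IsPower

theorem IsPower.isTrivialBundle {X : Scheme.{u}} {L N : LineBundle X}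
    (h : IsPower L.toVecBundleData 0 N.toVecBundleData) : IsTrivialBundle N := by
  obtain ⟨P, hP⟩ := h
  refine ⟨fun _ => L.zero ≫ P, isGlobalFrame_iff.mpr
    ⟨by rw [Category.assoc, hP.comp_π, L.zero_π], .of_local fun y => ?_⟩⟩
  obtain ⟨U, hyU, e, heπ, he⟩ := L.exists_isGenerator (𝟙 X) y
  refine ⟨U, hyU, ?_⟩
  have hzero : U.ι ≫ L.zero ≫ P = e ≫ P := by
    simpa [L.zero_smul, N.one_smul, reassoc_of% heπ] using hP.smul 0 e
  exact hzero ▸ hP.isGenerator he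

theorem LineBundle.exists_isGenerator_pair {X : Scheme.{u}} (L M : LineBundle X) (x : X) :
    ∃ U : X.Opens, x ∈ U ∧ ∃ (a : U.toScheme ⟶ L.tot) (b : U.toScheme ⟶ M.tot),
      a ≫ L.π = U.ι ∧ b ≫ M.π = U.ι ∧ L.IsGenerator a ∧ M.IsGenerator b := by
  obtain ⟨V, hxV, a, haπ, ha⟩ := L.exists_isGenerator (𝟙 X) x
  obtain ⟨W, hxW, b, hbπ, hb⟩ := M.exists_isGenerator (𝟙 X) x
  refine ⟨V ⊓ W, ⟨hxV, hxW⟩, X.homOfLE inf_le_left ≫ a, X.homOfLE inf_le_right ≫ b, ?_, ?_,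
    ha.comp _, hb.comp _⟩
  · simp [haπ]
  · simp [hbπ]

namespace IsTensor

variable {X : Scheme.{u}} {L M N : LineBundle X}
  {β : ∀ {T : Scheme.{u}} (a : T ⟶ L.tot) (b : T ⟶ M.tot), a ≫ L.π = b ≫ M.π → (T ⟶ N.tot)}

theorem isGenerator_pairing
    (hnat : ∀ {T' T : Scheme.{u}} (g : T' ⟶ T) (a : T ⟶ L.tot) (b : T ⟶ M.tot) (h h'),
      g ≫ β a b h = β (g ≫ a) (g ≫ b) h')
    (hleft : ∀ {T : Scheme.{u}} (f : Γ(T, ⊤)) (a : T ⟶ L.tot) (b : T ⟶ M.tot) (h₁ h₂),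
      β (L.smul f a) b h₁ = N.smul f (β a b h₂))
    (hright : ∀ {T : Scheme.{u}} (f : Γ(T, ⊤)) (a : T ⟶ L.tot) (b : T ⟶ M.tot) (h₁ h₂),
      β a (M.smul f b) h₁ = N.smul f (β a b h₂))
    (hframe : ∀ (U : X.Opens) (a : Fin 1 → (U.toScheme ⟶ L.tot)) (b : Fin 1 → (U.toScheme ⟶ M.tot)),
      L.toVecBundleData.IsFrame U a → M.toVecBundleData.IsFrame U b →
      ∀ h : a 0 ≫ L.π = b 0 ≫ M.π,
        N.toVecBundleData.IsFrame (n := 1) U (fun _ => β (a 0) (b 0) h))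
    {T : Scheme.{u}} {a : T ⟶ L.tot} {b : T ⟶ M.tot} (ha : L.IsGenerator a)
    (hb : M.IsGenerator b) (h : a ≫ L.π = b ≫ M.π) : N.IsGenerator (β a b h) := by
  refine .of_local fun y => ?_
  obtain ⟨V, hyV, s, t, hsπ, htπ, hs, ht⟩ := L.exists_isGenerator_pair M ((a ≫ L.π) y)
  have hst := (isFrame_iff.mp (hframe V (fun _ => s) (fun _ => t) (isFrame_iff.mpr ⟨hsπ, hs⟩)
    (isFrame_iff.mpr ⟨htπ, ht⟩) (hsπ.trans htπ.symm))).2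
  let W := (a ≫ L.π) ⁻¹ᵁ V
  let r := (a ≫ L.π) ∣_ V
  have hr : r ≫ V.ι = W.ι ≫ a ≫ L.π := morphismRestrict_ι _ _
  obtain ⟨u, hu, hua⟩ := (hs.comp r).exists_isUnit_smul_eq (ha.comp W.ι)
    (by rw [Category.assoc, Category.assoc, hsπ, hr])
  obtain ⟨v, hv, hvb⟩ := (ht.comp r).exists_isUnit_smul_eq (hb.comp W.ι)
    (by rw [Category.assoc, Category.assoc, htπ, hr, ← h])
  refine ⟨W, hyV, ?_⟩
  have hrst : (r ≫ s) ≫ L.π = (r ≫ t) ≫ M.π := by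
    rw [Category.assoc, Category.assoc, hsπ, htπ]
  have hβ : W.ι ≫ β a b h = N.smul (u * v) (r ≫ β s t (hsπ.trans htπ.symm)) := by
    rw [hnat W.ι a b h (by simp [h])]
    simp only [← hua, ← hvb]
    rw [hleft u _ _ _ (by rw [M.smul_π, hrst]), hright v _ _ _ hrst, N.mul_smul,
      hnat r s t _ hrst]
  exact hβ ▸ (hst.comp r).smul_isUnit (hu.mul hv)

theorem isPower {m : ℕ} (h : IsTensor M L N)
    (hM : IsPower L.toVecBundleData m M.toVecBundleData) :
    IsPower L.toVecBundleData (m + 1) N.toVecBundleData := by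
  obtain ⟨β, hπ, hnat, -, -, hleft, hright, hframe⟩ := h
  obtain ⟨P, hP⟩ := hM
  have hid : P ≫ M.π = 𝟙 L.tot ≫ L.π := by rw [hP.comp_π, Category.id_comp]
  have hβ {T : Scheme.{u}} (a : T ⟶ L.tot) :
      a ≫ β P (𝟙 _) hid = β (a ≫ P) a (by rw [Category.assoc, hP.comp_π]) := by
    rw [hnat a P (𝟙 _) hid (by simp [hP.comp_π])]
    simp only [Category.comp_id]
  refine ⟨β P (𝟙 _) hid, by rw [hπ, hP.comp_π], fun f a => ?_, fun {T e} he => ?_⟩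
  · simp only [hβ, hP.smul]
    rw [hleft _ _ _ _ (by simp [hP.comp_π, L.smul_π]), hright _ _ _ _ (by simp [hP.comp_π]),
      ← N.mul_smul, pow_succ]
  · rw [hβ]
    exact isGenerator_pairing hnat hleft hright hframe (hP.isGenerator he) he _

end IsTensor

theorem IsTensorPow.isPower {X : Scheme.{u}} {L N : LineBundle X} {m : ℕ}
    (h : IsTensorPow L m N) : IsPower L.toVecBundleData m N.toVecBundleData := by
  induction m generalizing N with
  | zero =>
    obtain ⟨s, hs⟩ := h
    obtain ⟨hsπ, hs⟩ := isGlobalFrame_iff.mp hs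
    refine ⟨L.π ≫ s 0, by rw [Category.assoc, hsπ, Category.comp_id], fun f a => ?_, fun _ => ?_⟩
    · rw [pow_zero, N.one_smul, ← Category.assoc, L.smul_π, Category.assoc]
    · rw [← Category.assoc]
      exact hs.comp _
  | succ m ih =>
    obtain ⟨M, hM, hN⟩ := h
    exact hN.isPower (ih hM)

/-- `R a b c` says that `c` is a product of the generators `a` and `b`. Such products, prescribed
locally and compatibly with rescaling of `a` and `b`, extend to a tensor product pairing. -/
structure IsGeneratorPairing {X : Scheme.{u}} (L M N : LineBundle X)
    (R : ∀ {T : Scheme.{u}}, (T ⟶ L.tot) → (T ⟶ M.tot) → (T ⟶ N.tot) → Prop) : Prop where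
  left : ∀ {T : Scheme.{u}} {a : T ⟶ L.tot} {b c}, R a b c → L.IsGenerator a
  right : ∀ {T : Scheme.{u}} {a : T ⟶ L.tot} {b c}, R a b c → M.IsGenerator b
  isGenerator : ∀ {T : Scheme.{u}} {a : T ⟶ L.tot} {b c}, R a b c → N.IsGenerator c
  left_π : ∀ {T : Scheme.{u}} {a : T ⟶ L.tot} {b c}, R a b c → a ≫ L.π = c ≫ N.π
  right_π : ∀ {T : Scheme.{u}} {a : T ⟶ L.tot} {b c}, R a b c → b ≫ M.π = c ≫ N.π
  comp : ∀ {T' T : Scheme.{u}} (t : T' ⟶ T) {a : T ⟶ L.tot} {b c}, R a b c →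
    R (t ≫ a) (t ≫ b) (t ≫ c)
  eq_smul : ∀ {T : Scheme.{u}} {a : T ⟶ L.tot} {b c c'} {f g : Γ(T, ⊤)}, R a b c →
    R (L.smul f a) (M.smul g b) c' → c' = N.smul (f * g) c
  exists_local : ∀ x : X, ∃ U : X.Opens, x ∈ U ∧ ∃ (a : U.toScheme ⟶ L.tot)
    (b : U.toScheme ⟶ M.tot) (c : U.toScheme ⟶ N.tot), a ≫ L.π = U.ι ∧ R a b c

namespace IsGeneratorPairing

variable {X : Scheme.{u}} {L M N : LineBundle X}
  {R : ∀ {T : Scheme.{u}}, (T ⟶ L.tot) → (T ⟶ M.tot) → (T ⟶ N.tot) → Prop}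

theorem swap (hR : IsGeneratorPairing L M N R) :
    IsGeneratorPairing M L N (fun b a c => R a b c) where
  left := hR.right
  right := hR.left
  isGenerator := hR.isGenerator
  left_π := hR.right_π
  right_π := hR.left_π
  comp t _ _ _ h := hR.comp t h
  eq_smul h h' := by rw [hR.eq_smul h h', mul_comm]
  exists_local x := by
    obtain ⟨U, hxU, a, b, c, haπ, h⟩ := hR.exists_local x
    exact ⟨U, hxU, b, a, c, by rw [hR.right_π h, ← hR.left_π h, haπ], h⟩

theorem exists_rel_smul_eq (hR : IsGeneratorPairing L M N R) {T : Scheme.{u}} (a : T ⟶ L.tot)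
    (b : T ⟶ M.tot) (h : a ≫ L.π = b ≫ M.π) (y : T) :
    ∃ U : T.Opens, y ∈ U ∧ ∃ (e : U.toScheme ⟶ L.tot) (d : U.toScheme ⟶ M.tot)
      (c : U.toScheme ⟶ N.tot), R e d c ∧ U.ι ≫ a ≫ L.π = e ≫ L.π ∧
        ∃ f g, L.smul f e = U.ι ≫ a ∧ M.smul g d = U.ι ≫ b := by
  obtain ⟨V, hyV, e, d, c, heπ, hedc⟩ := hR.exists_local ((a ≫ L.π) y)
  have hr : ((a ≫ L.π) ⁻¹ᵁ V).ι ≫ a ≫ L.π = ((a ≫ L.π) ∣_ V ≫ e) ≫ L.π := by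
    rw [Category.assoc, heπ, morphismRestrict_ι]
  have hedc' := hR.comp ((a ≫ L.π) ∣_ V) hedc
  obtain ⟨f, hf⟩ := (hR.left hedc').exists_smul_eq ((Category.assoc _ _ _).trans hr)
  obtain ⟨g, hg⟩ := (hR.right hedc').exists_smul_eq (a := ((a ≫ L.π) ⁻¹ᵁ V).ι ≫ b) (by
    rw [hR.right_π hedc', ← hR.left_π hedc', ← hr, Category.assoc, ← h])
  exact ⟨_, hyV, _, _, _, hedc', hr, f, g, hf, hg⟩

theorem smul_eq_smul (hR : IsGeneratorPairing L M N R) {T : Scheme.{u}}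
    {e e' : T ⟶ L.tot} {d d' : T ⟶ M.tot} {c c' : T ⟶ N.tot}
    (hc : R e d c) (hc' : R e' d' c') {f g f' g' : Γ(T, ⊤)}
    (he : L.smul f e = L.smul f' e') (hd : M.smul g d = M.smul g' d') :
    N.smul (f * g) c = N.smul (f' * g') c' := by
  obtain ⟨u, -, rfl⟩ := (hR.left hc).exists_isUnit_smul_eq (hR.left hc')
    (by simpa only [L.smul_π] using (congrArg (· ≫ L.π) he).symm)
  obtain ⟨v, -, rfl⟩ := (hR.right hc).exists_isUnit_smul_eq (hR.right hc')
    (by simpa only [M.smul_π] using (congrArg (· ≫ M.π) hd).symm)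
  rw [← L.mul_smul] at he
  rw [← M.mul_smul] at hd
  rw [hR.eq_smul hc hc', ← N.mul_smul, (hR.left hc).smul_left_injective he,
    (hR.right hc).smul_left_injective hd, mul_mul_mul_comm]

theorem exists_pairing (hR : IsGeneratorPairing L M N R) {T : Scheme.{u}} (a : T ⟶ L.tot)
    (b : T ⟶ M.tot) (h : a ≫ L.π = b ≫ M.π) :
    ∃ n : T ⟶ N.tot, ∀ {T' : Scheme.{u}} {t : T' ⟶ T} {e d c}, R e d c →
      ∀ {f g}, L.smul f e = t ≫ a → M.smul g d = t ≫ b → t ≫ n = N.smul (f * g) c := by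
  obtain ⟨n, hn⟩ := exists_hom_of_local
    (fun {T'} t n => ∃ (e : T' ⟶ L.tot) (d : T' ⟶ M.tot) (c : T' ⟶ N.tot) (f g : Γ(T', ⊤)),
      R e d c ∧ L.smul f e = t ≫ a ∧ M.smul g d = t ≫ b ∧ N.smul (f * g) c = n)
    (fun _ _ s _ _ ⟨e, d, c, f, g, hc, hf, hg, hn⟩ =>
      ⟨s ≫ e, s ≫ d, s ≫ c, s.appTop f, s.appTop g, hR.comp s hc,
        by rw [← L.smul_natural, hf, Category.assoc], by rw [← M.smul_natural, hg, Category.assoc],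
        by rw [← map_mul, ← N.smul_natural, hn]⟩)
    (fun _ _ _ _ ⟨e, d, c, f, g, hc, hf, hg, hn⟩ ⟨e', d', c', f', g', hc', hf', hg', hn'⟩ => by
      rw [← hn, ← hn', hR.smul_eq_smul hc hc' (hf.trans hf'.symm) (hg.trans hg'.symm)])
    (fun y => by
      obtain ⟨U, hyU, e, d, c, hc, -, f, g, hf, hg⟩ := hR.exists_rel_smul_eq a b h y
      exact ⟨U, hyU, _, e, d, c, f, g, hc, hf, hg, rfl⟩)
  exact ⟨n, fun hc _ _ hf hg => hn ⟨_, _, _, _, _, hc, hf, hg, rfl⟩⟩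

variable (hR : IsGeneratorPairing L M N R) {T : Scheme.{u}} (a : T ⟶ L.tot) (b : T ⟶ M.tot)
  (h : a ≫ L.π = b ≫ M.π)

/-- The bilinear extension of a product of generators. -/
def pairing : T ⟶ N.tot :=
  (hR.exists_pairing a b h).choose

variable {a b}

theorem comp_pairing_eq {T' : Scheme.{u}} {t : T' ⟶ T} {e d c} (hc : R e d c) {f g}
    (hf : L.smul f e = t ≫ a) (hg : M.smul g d = t ≫ b) :
    t ≫ hR.pairing a b h = N.smul (f * g) c :=
  (hR.exists_pairing a b h).choose_spec hc hf hg

theorem comp_pairing {T' : Scheme.{u}} (t : T' ⟶ T) (h') :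
    t ≫ hR.pairing a b h = hR.pairing (t ≫ a) (t ≫ b) h' := by
  refine hom_ext_of_local fun y => ?_
  obtain ⟨U, hyU, e, d, c, hc, -, f, g, hf, hg⟩ := hR.exists_rel_smul_eq _ _ h' y
  refine ⟨U, hyU, ?_⟩
  rw [hR.comp_pairing_eq h' hc hf hg, ← Category.assoc]
  exact hR.comp_pairing_eq h hc (by rw [hf, Category.assoc]) (by rw [hg, Category.assoc])

theorem pairing_π : hR.pairing a b h ≫ N.π = a ≫ L.π := by
  refine hom_ext_of_local fun y => ?_
  obtain ⟨U, hyU, e, d, c, hc, heπ, f, g, hf, hg⟩ := hR.exists_rel_smul_eq a b h y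
  exact ⟨U, hyU, by rw [← Category.assoc, hR.comp_pairing_eq h hc hf hg, N.smul_π, heπ,
    hR.left_π hc]⟩

theorem pairing_swap : hR.swap.pairing b a h.symm = hR.pairing a b h := by
  refine hom_ext_of_local fun y => ?_
  obtain ⟨U, hyU, e, d, c, hc, -, f, g, hf, hg⟩ := hR.exists_rel_smul_eq a b h y
  exact ⟨U, hyU, by rw [hR.comp_pairing_eq h hc hf hg, hR.swap.comp_pairing_eq h.symm hc hg hf,
    mul_comm]⟩

theorem pairing_smul_left (r : Γ(T, ⊤)) (h') :
    hR.pairing (L.smul r a) b h' = N.smul r (hR.pairing a b h) := by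
  refine hom_ext_of_local fun y => ?_
  obtain ⟨U, hyU, e, d, c, hc, -, f, g, hf, hg⟩ := hR.exists_rel_smul_eq a b h y
  refine ⟨U, hyU, ?_⟩
  rw [N.smul_natural, hR.comp_pairing_eq h hc hf hg, ← N.mul_smul, ← mul_assoc]
  exact hR.comp_pairing_eq h' hc (by rw [L.smul_natural, L.mul_smul, hf]) hg

theorem pairing_add_left {a' : T ⟶ L.tot} (haa') (h') (h'') (h''') :
    hR.pairing (L.add a a' haa') b h'' = N.add (hR.pairing a b h) (hR.pairing a' b h') h''' := by
  refine hom_ext_of_local fun y => ?_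
  obtain ⟨U, hyU, e, d, c, hc, heπ, f, g, hf, hg⟩ := hR.exists_rel_smul_eq a b h y
  obtain ⟨f', hf'⟩ := (hR.left hc).exists_smul_eq (a := U.ι ≫ a')
    (by rw [← heπ, haa', Category.assoc])
  refine ⟨U, hyU, ?_⟩
  have hff' : L.smul (f + f') e = U.ι ≫ L.add a a' haa' := by
    rw [L.add_smul _ _ _ (by simp only [L.smul_π]), L.add_natural _ _ _ _ (by simp [haa'])]
    exact L.add_congr hf hf' _ _
  rw [hR.comp_pairing_eq h'' hc hff' hg, add_mul, N.add_smul _ _ _ (by simp only [N.smul_π]),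
    N.add_natural _ _ _ _ (by rw [Category.assoc, h''', Category.assoc])]
  exact N.add_congr (hR.comp_pairing_eq h hc hf hg).symm (hR.comp_pairing_eq h' hc hf' hg).symm _ _

theorem isGenerator_pairing (ha : L.IsGenerator a) (hb : M.IsGenerator b) :
    N.IsGenerator (hR.pairing a b h) := by
  refine .of_local fun y => ?_
  obtain ⟨U, hyU, e, d, c, hc, heπ, -⟩ := hR.exists_rel_smul_eq a b h y
  obtain ⟨u, hu, hua⟩ := (hR.left hc).exists_isUnit_smul_eq (ha.comp U.ι)
    (by rw [← heπ, Category.assoc])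
  obtain ⟨v, hv, hvb⟩ := (hR.right hc).exists_isUnit_smul_eq (hb.comp U.ι)
    (by rw [hR.right_π hc, ← hR.left_π hc, ← heπ, h, Category.assoc])
  refine ⟨U, hyU, ?_⟩
  rw [hR.comp_pairing_eq h hc hua hvb]
  exact (hR.isGenerator hc).smul_isUnit (hu.mul hv)

theorem isTensor (hR : IsGeneratorPairing L M N R) : IsTensor L M N := by
  refine ⟨hR.pairing, fun _ _ h => hR.pairing_π h, fun g _ _ h h' => hR.comp_pairing h g h',
    fun _ _ _ haa' h h' h'' h''' => hR.pairing_add_left h' haa' h'' h h''', ?_,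
    fun r _ _ h h' => hR.pairing_smul_left h' r h, ?_, ?_⟩
  · intro T a b b' hbb' h h' h'' h'''
    simp only [← hR.pairing_swap] at h''' ⊢
    exact hR.swap.pairing_add_left _ _ _ _ _
  · intro T r a b h h'
    simp only [← hR.pairing_swap]
    exact hR.swap.pairing_smul_left _ _ _
  · intro U sL sM hsL hsM h
    obtain ⟨hsLπ, hsL⟩ := isFrame_iff.mp hsL
    obtain ⟨-, hsM⟩ := isFrame_iff.mp hsM
    exact isFrame_iff.mpr ⟨(hR.pairing_π h).trans hsLπ, hR.isGenerator_pairing h hsL hsM⟩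

end IsGeneratorPairing

theorem IsPowerMap.isTensor {X : Scheme.{u}} {L M N : LineBundle X} {m : ℕ}
    {P : L.tot ⟶ M.tot} {P' : L.tot ⟶ N.tot}
    (hP : IsPowerMap L.toVecBundleData m M.toVecBundleData P)
    (hP' : IsPowerMap L.toVecBundleData (m + 1) N.toVecBundleData P') : IsTensor M L N := by
  refine IsGeneratorPairing.isTensor
    (R := fun b a c => L.IsGenerator a ∧ a ≫ P = b ∧ a ≫ P' = c) ⟨?_, ?_, ?_, ?_, ?_, ?_, ?_, ?_⟩
  · rintro _ _ a _ ⟨ha, rfl, rfl⟩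
    exact hP.isGenerator ha
  · exact fun h => h.1
  · rintro _ _ a _ ⟨ha, rfl, rfl⟩
    exact hP'.isGenerator ha
  · rintro _ _ a _ ⟨-, rfl, rfl⟩
    rw [Category.assoc, hP.comp_π, Category.assoc, hP'.comp_π]
  · rintro _ _ a _ ⟨-, rfl, rfl⟩
    rw [Category.assoc, hP'.comp_π]
  · rintro _ _ t _ a _ ⟨ha, rfl, rfl⟩
    exact ⟨ha.comp t, Category.assoc _ _ _, Category.assoc _ _ _⟩
  · rintro _ _ a _ _ f g ⟨ha, rfl, rfl⟩ ⟨-, hf, rfl⟩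
    rw [hP.smul] at hf
    rw [hP'.smul, pow_succ, (hP.isGenerator ha).smul_left_injective hf]
  · intro x
    obtain ⟨U, hxU, a, haπ, ha⟩ := L.exists_isGenerator (𝟙 X) x
    exact ⟨U, hxU, a ≫ P, a, a ≫ P', by rw [Category.assoc, hP.comp_π, haπ, Category.comp_id],
      ha, rfl, rfl⟩

/-! ### Line bundles from cocycles -/

/-- The affine line over a scheme. -/
abbrev AffineLine (S : Scheme.{u}) : Scheme.{u} :=
  𝔸(PUnit.{u + 1}; S)

namespace AffineLine

/-- The projection of the affine line to its base. -/
abbrev π (S : Scheme.{u}) : AffineLine S ⟶ S :=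
  𝔸(PUnit.{u + 1}; S) ↘ S

variable {T S : Scheme.{u}}

/-- The `T`-point of the affine line with base point `v` and coordinate `f`. -/
def point (v : T ⟶ S) (f : Γ(T, ⊤)) : T ⟶ AffineLine S :=
  AffineSpace.homOfVector v fun _ => f

theorem comp_point {T' : Scheme.{u}} (t : T' ⟶ T) (v : T ⟶ S) (f : Γ(T, ⊤)) :
    t ≫ point v f = point (t ≫ v) (t.appTop f) :=
  AffineSpace.comp_homOfVector _ _ _

theorem point_π (v : T ⟶ S) (f : Γ(T, ⊤)) : point v f ≫ π S = v :=
  AffineSpace.homOfVector_over _ _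

theorem point_injective (v : T ⟶ S) : Function.Injective (point v) := fun f g h => by
  have h := congrArg (fun a => a.appTop (AffineSpace.coord S PUnit.unit)) h
  simpa only [point, AffineSpace.homOfVector_appTop_coord] using h

theorem exists_point_eq {a : T ⟶ AffineLine S} {v : T ⟶ S} (h : a ≫ π S = v) :
    ∃ f, point v f = a :=
  ⟨a.appTop (AffineSpace.coord S PUnit.unit), AffineSpace.hom_ext ((point_π _ _).trans h.symm)
    fun _ => AffineSpace.homOfVector_appTop_coord _ _ _⟩

theorem hom_ext {Z : Scheme.{u}} {a b : AffineLine S ⟶ Z}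
    (h : ∀ f, point (π S) f ≫ a = point (π S) f ≫ b) : a = b := by
  obtain ⟨f, hf⟩ := exists_point_eq (Category.id_comp (π S))
  simpa only [hf, Category.id_comp] using h f

end AffineLine

/-- A multiplicative cocycle on `X`: functions `g v w` comparing two lifts `v`, `w` of a `T`-point
of `X` to members of an open cover. The cover is closed under shrinking, which makes it locally
directed, so that the affine lines over its members glue. -/
structure LineCocycle (X : Scheme.{u}) where
  /-- The members of the cover. -/
  opens : LowerSet X.Opens
  exists_mem : ∀ x : X, ∃ V ∈ opens, x ∈ V
  /-- The transition functions. -/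
  g : ∀ {T : Scheme.{u}} {V W : opens} (v : T ⟶ V.1.toScheme) (w : T ⟶ W.1.toScheme),
    v ≫ V.1.ι = w ≫ W.1.ι → Γ(T, ⊤)
  g_self : ∀ {T : Scheme.{u}} {V : opens} (v : T ⟶ V.1.toScheme), g v v rfl = 1
  g_mul_g : ∀ {T : Scheme.{u}} {U V W : opens} (u : T ⟶ U.1.toScheme) (v : T ⟶ V.1.toScheme)
    (w : T ⟶ W.1.toScheme) (h h'), g u v h * g v w h' = g u w (h.trans h')
  appTop_g : ∀ {T' T : Scheme.{u}} (t : T' ⟶ T) {V W : opens} (v : T ⟶ V.1.toScheme)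
    (w : T ⟶ W.1.toScheme) (h h'), t.appTop (g v w h) = g (t ≫ v) (t ≫ w) h'

namespace LineCocycle

variable {X : Scheme.{u}} (C : LineCocycle X)

/-- The open cover underlying a cocycle. -/
def cover : X.OpenCover :=
  X.openCoverOfIsOpenCover (fun V : C.opens => V.1) (.mk (eq_top_iff.mpr fun x _ => by
    obtain ⟨V, hV, hxV⟩ := C.exists_mem x
    exact TopologicalSpace.Opens.mem_iSup.mpr ⟨⟨V, hV⟩, hxV⟩))

instance : Preorder C.cover.I₀ :=
  inferInstanceAs (Preorder C.opens)

theorem isBasis_opens :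
    TopologicalSpace.Opens.IsBasis (Set.range fun V : C.opens => V.1) := by
  refine TopologicalSpace.Opens.isBasis_iff_nbhd.mpr fun {U x} hxU => ?_
  obtain ⟨V, hV, hxV⟩ := C.exists_mem x
  exact ⟨V ⊓ U, ⟨⟨V ⊓ U, C.opens.lower inf_le_left hV⟩, rfl⟩, ⟨hxV, hxU⟩, inf_le_right⟩

instance : C.cover.LocallyDirected :=
  .ofIsBasisOpensRange (fun {V W} => by
    change V.1 ≤ W.1 ↔ V.1.ι.opensRange ≤ W.1.ι.opensRange
    simp only [Scheme.Opens.opensRange_ι]) <| by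
    change TopologicalSpace.Opens.IsBasis (Set.range fun V : C.opens => V.1.ι.opensRange)
    simpa only [Scheme.Opens.opensRange_ι] using C.isBasis_opens

variable {C} in
/-- The change of coordinates between the affine lines over two members of the cover. -/
def lineMap {V W : C.opens} (h : V.1 ≤ W.1) : AffineLine V.1 ⟶ AffineLine W.1 :=
  AffineLine.point (AffineLine.π _ ≫ X.homOfLE h)
    (C.g (AffineLine.π _ ≫ X.homOfLE h) (AffineLine.π _) (by simp) *
      AffineSpace.coord _ PUnit.unit)

variable {C} in
theorem point_lineMap {V W : C.opens} (h : V.1 ≤ W.1) {T : Scheme.{u}} (v : T ⟶ V.1.toScheme)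
    (f : Γ(T, ⊤)) : AffineLine.point v f ≫ lineMap h =
      AffineLine.point (v ≫ X.homOfLE h) (C.g (v ≫ X.homOfLE h) v (by simp) * f) := by
  have hv := AffineLine.point_π v f
  rw [lineMap, AffineLine.comp_point, map_mul, C.appTop_g _ _ _ _ (by simp)]
  simp only [reassoc_of% hv, hv]
  congr 2
  exact AffineSpace.homOfVector_appTop_coord _ _ _

/-- The affine lines over the members of the cover, with changes of coordinates as transition
maps. -/
def lineFunctor : C.opens ⥤ Scheme.{u} where
  obj V := AffineLine V.1
  map h := lineMap (leOfHom h)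
  map_id V := AffineLine.hom_ext fun f => by
    simp only [point_lineMap, Scheme.homOfLE_rfl, Category.comp_id, C.g_self, one_mul]
  map_comp i j := AffineLine.hom_ext fun f => by
    rw [← Category.assoc]
    simp only [point_lineMap, ← mul_assoc, C.g_mul_g, Category.assoc, Scheme.homOfLE_homOfLE]

theorem isPullback_lineMap {V W : C.opens} (h : V.1 ≤ W.1) :
    IsPullback (lineMap h) (AffineLine.π V.1) (AffineLine.π W.1) (X.homOfLE h) := by
  refine isPullback_iff_existsUnique.mpr ⟨AffineLine.point_π _ _, fun T a v hav => ?_⟩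
  obtain ⟨f, rfl⟩ := AffineLine.exists_point_eq hav
  refine ⟨AffineLine.point v (C.g v (v ≫ X.homOfLE h) (by simp) * f), ⟨?_, AffineLine.point_π _ _⟩,
    ?_⟩
  · rw [point_lineMap, ← mul_assoc, C.g_mul_g, C.g_self, one_mul]
  · rintro b ⟨hb, hbv⟩
    obtain ⟨f', rfl⟩ := AffineLine.exists_point_eq hbv
    rw [point_lineMap] at hb
    rw [← AffineLine.point_injective _ hb, ← mul_assoc, C.g_mul_g, C.g_self, one_mul]

theorem trans_cover {V W : C.opens} (h : V ⟶ W) :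
    C.cover.trans (i := V) (j := W) h = X.homOfLE (leOfHom h) :=
  (cancel_mono W.1.ι).mp ((C.cover.trans_map (i := V) (j := W) h).trans (X.homOfLE_ι _).symm)

/-- The gluing datum consisting of the affine lines over the members of the cover. -/
def gluingData : C.cover.RelativeGluingData where
  functor := C.lineFunctor
  natTrans :=
    { app V := AffineLine.π (show C.opens from V).1
      naturality V W h := (C.isPullback_lineMap (leOfHom h)).w.trans
        (congrArg (AffineLine.π _ ≫ ·) (C.trans_cover h).symm) }
  equifibered {V W} h := by
    change IsPullback (lineMap (leOfHom h)) _ _ (C.cover.trans (i := V) (j := W) h)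
    exact C.trans_cover h ▸ C.isPullback_lineMap (leOfHom h)

/-- The total space of the line bundle with cocycle `C`. -/
def tot : Scheme.{u} :=
  C.gluingData.glued

/-- The projection of the total space to the base. -/
def π : C.tot ⟶ X :=
  C.gluingData.toBase

/-- The inclusion into the total space of the affine line over a member of the cover. -/
def ι (V : C.opens) : AffineLine V.1 ⟶ C.tot :=
  colimit.ι C.gluingData.functor V

theorem isPullback_ι (V : C.opens) : IsPullback (C.ι V) (AffineLine.π V.1) C.π V.1.ι :=
  (C.gluingData.isPullback_natTrans_ι_toBase V).flip

theorem lineMap_ι {V W : C.opens} (h : V.1 ≤ W.1) : lineMap h ≫ C.ι W = C.ι V :=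
  colimit.w C.gluingData.functor (homOfLE (show V ≤ W from h))

variable {C} {T T' : Scheme.{u}} {V W : C.opens}

/-- The `T`-point of the total space with base point `v` and coordinate `f` over `V`. -/
def chart (v : T ⟶ V.1.toScheme) (f : Γ(T, ⊤)) : T ⟶ C.tot :=
  AffineLine.point v f ≫ C.ι V

theorem comp_chart (t : T' ⟶ T) (v : T ⟶ V.1.toScheme) (f : Γ(T, ⊤)) :
    t ≫ chart v f = chart (t ≫ v) (t.appTop f) := by
  rw [chart, ← Category.assoc, AffineLine.comp_point, chart]

theorem chart_π (v : T ⟶ V.1.toScheme) (f : Γ(T, ⊤)) : chart v f ≫ C.π = v ≫ V.1.ι := by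
  have hv := AffineLine.point_π v f
  rw [chart, Category.assoc, (C.isPullback_ι V).w, reassoc_of% hv]

theorem chart_injective (v : T ⟶ V.1.toScheme) : Function.Injective (chart v) := fun _ _ h =>
  AffineLine.point_injective v ((C.isPullback_ι V).hom_ext h
    ((AffineLine.point_π _ _).trans (AffineLine.point_π _ _).symm))

theorem exists_chart_eq {c : T ⟶ C.tot} {v : T ⟶ V.1.toScheme} (h : c ≫ C.π = v ≫ V.1.ι) :
    ∃ f, chart v f = c := by
  obtain ⟨f, hf⟩ := AffineLine.exists_point_eq ((C.isPullback_ι V).lift_snd c v h)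
  exact ⟨f, by rw [chart, hf, (C.isPullback_ι V).lift_fst]⟩

theorem chart_homOfLE (h : V.1 ≤ W.1) (v : T ⟶ V.1.toScheme) (f : Γ(T, ⊤)) :
    chart v f = chart (v ≫ X.homOfLE h) (C.g (v ≫ X.homOfLE h) v (by simp) * f) := by
  rw [chart, chart, ← point_lineMap, Category.assoc, lineMap_ι]

theorem chart_eq_chart (v : T ⟶ V.1.toScheme) (w : T ⟶ W.1.toScheme) (h : v ≫ V.1.ι = w ≫ W.1.ι)
    (f : Γ(T, ⊤)) : chart v f = chart w (C.g w v h.symm * f) := by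
  let U : C.opens := ⟨V.1 ⊓ W.1, C.opens.lower inf_le_left V.2⟩
  have hU : IsPullback (X.homOfLE inf_le_left) (X.homOfLE inf_le_right) V.1.ι W.1.ι :=
    isPullback_opens_inf V.1 W.1
  obtain ⟨u, rfl, rfl⟩ : ∃ u : T ⟶ U.1.toScheme,
      u ≫ X.homOfLE inf_le_left = v ∧ u ≫ X.homOfLE inf_le_right = w :=
    ⟨hU.lift v w h, hU.lift_fst _ _ _, hU.lift_snd _ _ _⟩
  obtain ⟨f, rfl⟩ : ∃ f', C.g (u ≫ X.homOfLE inf_le_left) u (by simp) * f' = f :=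
    ⟨C.g u (u ≫ X.homOfLE inf_le_left) (by simp) * f, by
      rw [← mul_assoc, C.g_mul_g, C.g_self, one_mul]⟩
  rw [← mul_assoc, C.g_mul_g, ← chart_homOfLE, ← chart_homOfLE]

theorem exists_lift (C : LineCocycle X) (x : T ⟶ X) (y : T) : ∃ U : T.Opens, y ∈ U ∧
    ∃ (V : C.opens) (v : U.toScheme ⟶ V.1.toScheme), v ≫ V.1.ι = U.ι ≫ x := by
  obtain ⟨V, hV, hyV⟩ := C.exists_mem (x y)
  exact ⟨x ⁻¹ᵁ V, hyV, ⟨V, hV⟩, x ∣_ V, morphismRestrict_ι _ _⟩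

/-- The coordinate over `V` of a `T`-point of the total space, where `v` lifts its base point. -/
def coord (v : T ⟶ V.1.toScheme) (c : T ⟶ C.tot) (h : c ≫ C.π = v ≫ V.1.ι) : Γ(T, ⊤) :=
  (exists_chart_eq h).choose

theorem chart_coord (v : T ⟶ V.1.toScheme) (c : T ⟶ C.tot) (h : c ≫ C.π = v ≫ V.1.ι) :
    chart v (coord v c h) = c :=
  (exists_chart_eq h).choose_spec

theorem coord_eq_iff {v : T ⟶ V.1.toScheme} {c : T ⟶ C.tot} {h : c ≫ C.π = v ≫ V.1.ι}
    {f : Γ(T, ⊤)} : coord v c h = f ↔ c = chart v f := by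
  rw [← (chart_injective v).eq_iff, chart_coord]

theorem appTop_coord (t : T' ⟶ T) (v : T ⟶ V.1.toScheme) (c : T ⟶ C.tot) (h h') :
    t.appTop (coord v c h) = coord (t ≫ v) (t ≫ c) h' := by
  rw [eq_comm, coord_eq_iff, ← comp_chart, chart_coord]

theorem g_mul_coord (v : T ⟶ V.1.toScheme) (w : T ⟶ W.1.toScheme) (c : T ⟶ C.tot) (hv hw hvw) :
    C.g w v hvw * coord v c hv = coord w c hw := by
  rw [eq_comm, coord_eq_iff, ← chart_eq_chart v w hvw.symm, chart_coord]

theorem hom_ext_of_coord {c c' : T ⟶ C.tot} (hπ : c ≫ C.π = c' ≫ C.π)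
    (h : ∀ {T' : Scheme.{u}} {V : C.opens} (t : T' ⟶ T) (v : T' ⟶ V.1.toScheme) (hv hv'),
      coord v (t ≫ c) hv = coord v (t ≫ c') hv') : c = c' := by
  refine hom_ext_of_local fun y => ?_
  obtain ⟨U, hyU, V, v, hv⟩ := C.exists_lift (c ≫ C.π) y
  have hc : (U.ι ≫ c) ≫ C.π = v ≫ V.1.ι := by rw [hv, Category.assoc]
  have hc' : (U.ι ≫ c') ≫ C.π = v ≫ V.1.ι := by rw [hv, hπ, Category.assoc]
  exact ⟨U, hyU, by rw [← chart_coord v _ hc, h U.ι v hc hc', chart_coord]⟩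

theorem exists_hom_of_coord (C : LineCocycle X) (x : T ⟶ X)
    (F : ∀ {T' : Scheme.{u}} {V : C.opens} (t : T' ⟶ T) (v : T' ⟶ V.1.toScheme),
      t ≫ x = v ≫ V.1.ι → Γ(T', ⊤))
    (hnat : ∀ {T'' T' : Scheme.{u}} {V : C.opens} (s : T'' ⟶ T') (t : T' ⟶ T)
      (v : T' ⟶ V.1.toScheme) (h h'), s.appTop (F t v h) = F (s ≫ t) (s ≫ v) h')
    (hg : ∀ {T' : Scheme.{u}} {V W : C.opens} (t : T' ⟶ T) (v : T' ⟶ V.1.toScheme)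
      (w : T' ⟶ W.1.toScheme) (hv hw h), C.g w v h * F t v hv = F t w hw) :
    ∃ c : T ⟶ C.tot, c ≫ C.π = x ∧ ∀ {T' : Scheme.{u}} {V : C.opens} (t : T' ⟶ T)
      (v : T' ⟶ V.1.toScheme) (h h'), coord v (t ≫ c) h = F t v h' := by
  obtain ⟨c, hc⟩ := exists_hom_of_local (fun {T'} t c => ∃ (V : C.opens) (v : T' ⟶ V.1.toScheme)
      (h : t ≫ x = v ≫ V.1.ι), c = chart v (F t v h))
    (by
      rintro T'' T' s t _ ⟨V, v, h, rfl⟩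
      exact ⟨V, s ≫ v, by rw [Category.assoc, h, Category.assoc], by rw [comp_chart, hnat]⟩)
    (by
      rintro T' t _ _ ⟨V, v, hv, rfl⟩ ⟨W, w, hw, rfl⟩
      rw [chart_eq_chart v w (hv.symm.trans hw), hg])
    (fun y => by
      obtain ⟨U, hyU, V, v, hv⟩ := C.exists_lift x y
      exact ⟨U, hyU, _, V, v, hv.symm, rfl⟩)
  refine ⟨c, hom_ext_of_local fun y => ?_, fun {T'} V t v h h' => ?_⟩
  · obtain ⟨U, hyU, V, v, hv⟩ := C.exists_lift x y
    exact ⟨U, hyU, by rw [← Category.assoc, hc ⟨V, v, hv.symm, rfl⟩, chart_π, hv]⟩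
  · rw [coord_eq_iff, hc ⟨V, v, h', rfl⟩]

theorem exists_zero (C : LineCocycle X) : ∃ z : X ⟶ C.tot, z ≫ C.π = 𝟙 X ∧
    ∀ {T : Scheme.{u}} {V : C.opens} (x : T ⟶ X) (v : T ⟶ V.1.toScheme) (h),
      coord v (x ≫ z) h = 0 := by
  obtain ⟨z, hzπ, hz⟩ := C.exists_hom_of_coord (𝟙 X) (fun _ _ _ => 0)
    (fun _ _ _ _ _ => map_zero _) (fun _ _ _ _ _ _ => mul_zero _)
  exact ⟨z, hzπ, fun x v h => hz x v h (by rw [← h, Category.assoc, hzπ])⟩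

variable (C) in
/-- The zero section, all of whose coordinates vanish. -/
def zero : X ⟶ C.tot :=
  C.exists_zero.choose

theorem zero_π : C.zero ≫ C.π = 𝟙 X :=
  C.exists_zero.choose_spec.1

theorem coord_zero (x : T ⟶ X) (v : T ⟶ V.1.toScheme) (h) : coord v (x ≫ C.zero) h = 0 :=
  C.exists_zero.choose_spec.2 _ _ _

theorem exists_linComb (r r' : Γ(T, ⊤)) (c c' : T ⟶ C.tot) (h : c ≫ C.π = c' ≫ C.π) :
    ∃ d : T ⟶ C.tot, d ≫ C.π = c ≫ C.π ∧
      ∀ {T' : Scheme.{u}} {V : C.opens} (t : T' ⟶ T) (v : T' ⟶ V.1.toScheme) (hd hc hc'),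
        coord v (t ≫ d) hd =
          t.appTop r * coord v (t ≫ c) hc + t.appTop r' * coord v (t ≫ c') hc' := by
  obtain ⟨d, hdπ, hd⟩ := C.exists_hom_of_coord (c ≫ C.π)
    (fun t v hv => t.appTop r * coord v (t ≫ c) (by rw [← hv, Category.assoc]) +
      t.appTop r' * coord v (t ≫ c') (by rw [← hv, h, Category.assoc]))
    (fun s t v hv hsv => by
      rw [map_add, map_mul, map_mul, appTop_coord _ _ _ _ (by simp [← hv]),
        appTop_coord _ _ _ _ (by simp [← hv, h])]
      simp only [Scheme.Hom.comp_appTop, CommRingCat.comp_apply, Category.assoc])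
    (fun t v w hv hw hvw => by
      rw [mul_add, mul_left_comm, mul_left_comm (C.g w v hvw), g_mul_coord, g_mul_coord])
  exact ⟨d, hdπ, fun t v h _ _ => hd t v h (by rw [← h, Category.assoc, hdπ])⟩

/-- The linear combination `r • c + r' • c'` of two `T`-points in the same fibre. -/
def linComb (r r' : Γ(T, ⊤)) (c c' : T ⟶ C.tot) (h : c ≫ C.π = c' ≫ C.π) : T ⟶ C.tot :=
  (exists_linComb r r' c c' h).choose

theorem linComb_π (r r' : Γ(T, ⊤)) (c c' : T ⟶ C.tot) (h) : linComb r r' c c' h ≫ C.π = c ≫ C.π :=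
  (exists_linComb r r' c c' h).choose_spec.1

theorem coord_linComb (r r' : Γ(T, ⊤)) (c c' : T ⟶ C.tot) (h) (t : T' ⟶ T)
    (v : T' ⟶ V.1.toScheme) (hd) :
    coord v (t ≫ linComb r r' c c' h) hd =
      t.appTop r * coord v (t ≫ c) (by rw [← hd]; simp only [Category.assoc, linComb_π]) +
      t.appTop r' * coord v (t ≫ c') (by rw [← hd]; simp only [Category.assoc, linComb_π, h]) :=
  (exists_linComb r r' c c' h).choose_spec.2 _ _ _ _ _

variable (C) in
/-- The bundle data on the total space of a cocycle. -/
def vecBundleData : VecBundleData X where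
  tot := C.tot
  π := C.π
  zero := C.zero
  zero_π := zero_π
  add a b h := linComb 1 1 a b h
  smul f a := linComb f 0 a a rfl
  add_π a b h := linComb_π _ _ _ _ _
  smul_π f a := linComb_π _ _ _ _ _
  add_natural t a b h h' := hom_ext_of_coord (by simp only [Category.assoc, linComb_π])
    fun s v _ _ => by
      simp only [coord_linComb, ← Category.assoc, map_one]
  smul_natural t f a := hom_ext_of_coord (by simp only [Category.assoc, linComb_π])
    fun s v _ _ => by
      simp only [coord_linComb, ← Category.assoc, map_zero, Scheme.Hom.comp_appTop,
        CommRingCat.comp_apply]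
  add_comm a b h h' := hom_ext_of_coord (by simp only [linComb_π, h]) fun t v _ _ => by
    simp only [coord_linComb, map_one, one_mul]
    exact _root_.add_comm _ _
  add_assoc a b c h₁ h₂ h₃ h₄ := hom_ext_of_coord (by simp only [linComb_π]) fun t v _ _ => by
    simp only [coord_linComb, map_one, one_mul, _root_.add_assoc]
  zero_add a h := hom_ext_of_coord (by simpa only [linComb_π] using h) fun t v _ _ => by
    simp only [coord_linComb, ← Category.assoc]
    simp only [coord_zero, map_one, one_mul, _root_.zero_add]
  one_smul a := hom_ext_of_coord (linComb_π _ _ _ _ _) fun t v _ _ => by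
    simp only [coord_linComb, map_one, one_mul, map_zero, zero_mul, add_zero]
  mul_smul f g a := hom_ext_of_coord (by simp only [linComb_π]) fun t v _ _ => by
    simp only [coord_linComb, map_mul, map_zero, zero_mul, add_zero, mul_assoc]
  smul_add f a b h h' := hom_ext_of_coord (by simp only [linComb_π]) fun t v _ _ => by
    simp only [coord_linComb, map_one, one_mul, map_zero, zero_mul, add_zero, mul_add]
  add_smul f g a h := hom_ext_of_coord (by simp only [linComb_π]) fun t v _ _ => by
    simp only [coord_linComb, map_one, one_mul, map_zero, zero_mul, add_zero, map_add, add_mul]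
  zero_smul a := hom_ext_of_coord
    (by rw [linComb_π, Category.assoc, zero_π, Category.comp_id]) fun t v _ _ => by
    rw [coord_linComb]
    simp only [← Category.assoc]
    simp only [coord_zero, map_zero, zero_mul, add_zero]
  smul_zero f x := hom_ext_of_coord (by simp only [linComb_π]) fun t v _ _ => by
    simp only [coord_linComb, ← Category.assoc]
    simp only [coord_zero, mul_zero, add_zero]

theorem smul_chart (f f' : Γ(T, ⊤)) (v : T ⟶ V.1.toScheme) :
    C.vecBundleData.smul f (chart v f') = chart v (f * f') := by
  have h := coord_linComb f 0 (chart v f') (chart v f') rfl (𝟙 T) v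
    (by rw [Category.id_comp, linComb_π, chart_π])
  have hf' : coord v (𝟙 T ≫ chart v f') (by rw [Category.id_comp, chart_π]) = f' :=
    coord_eq_iff.mpr (Category.id_comp _)
  rw [hf', map_zero, zero_mul, add_zero, coord_eq_iff, Category.id_comp] at h
  exact h

variable (C) in
/-- The generator of the line bundle with cocycle `C` over a member of the cover. -/
def frame {V : C.opens} (v : T ⟶ V.1.toScheme) : T ⟶ C.vecBundleData.tot :=
  chart v 1

theorem frame_π (v : T ⟶ V.1.toScheme) : C.frame v ≫ C.vecBundleData.π = v ≫ V.1.ι :=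
  chart_π _ _

theorem comp_frame {T' : Scheme.{u}} (t : T' ⟶ T) (v : T ⟶ V.1.toScheme) :
    t ≫ C.frame v = C.frame (t ≫ v) :=
  (comp_chart _ _ _).trans (congrArg _ (map_one _))

theorem smul_frame (f : Γ(T, ⊤)) (v : T ⟶ V.1.toScheme) :
    C.vecBundleData.smul f (C.frame v) = chart v f :=
  (smul_chart _ _ _).trans (congrArg _ (mul_one f))

theorem isGenerator_frame (v : T ⟶ V.1.toScheme) : C.vecBundleData.IsGenerator (C.frame v) := by
  intro T' t a ha
  rw [comp_frame] at ha ⊢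
  have haπ := ha.trans (frame_π _)
  exact ⟨coord _ a haπ, (smul_frame _ _).trans (chart_coord _ _ _), fun f hf =>
    (coord_eq_iff.mpr (hf.symm.trans (smul_frame f _))).symm⟩

variable (C) in
/-- The line bundle with cocycle `C`. -/
def lineBundle : LineBundle X :=
  .ofIsGenerator C.vecBundleData fun x => by
    obtain ⟨V, hV, hxV⟩ := C.exists_mem x
    exact ⟨V, hxV, C.frame (V := ⟨V, hV⟩) (𝟙 _), (frame_π _).trans (Category.id_comp _),
      isGenerator_frame _⟩

variable (C) in
theorem exists_comp_eq_smul_frame {S : Scheme.{u}} (x : S ⟶ X)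
    (F : ∀ {T : Scheme.{u}} {V : C.opens} (t : T ⟶ S) (v : T ⟶ V.1.toScheme),
      t ≫ x = v ≫ V.1.ι → Γ(T, ⊤))
    (hnat : ∀ {T' T : Scheme.{u}} {V : C.opens} (s : T' ⟶ T) (t : T ⟶ S)
      (v : T ⟶ V.1.toScheme) (h h'), s.appTop (F t v h) = F (s ≫ t) (s ≫ v) h')
    (hg : ∀ {T : Scheme.{u}} {V W : C.opens} (t : T ⟶ S) (v : T ⟶ V.1.toScheme)
      (w : T ⟶ W.1.toScheme) (hv hw h), C.g w v h * F t v hv = F t w hw) :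
    ∃ c : S ⟶ C.lineBundle.tot, c ≫ C.lineBundle.π = x ∧
      ∀ {T : Scheme.{u}} {V : C.opens} (t : T ⟶ S) (v : T ⟶ V.1.toScheme) (h),
        t ≫ c = C.lineBundle.smul (F t v h) (C.frame v) := by
  obtain ⟨c, hcx, hc⟩ := C.exists_hom_of_coord x F hnat hg
  refine ⟨c, hcx, fun t v h => ?_⟩
  exact (coord_eq_iff.mp (hc t v (by rw [Category.assoc, hcx, h]) h)).trans (smul_frame _ _).symm

end LineCocycle

namespace LineBundle

variable {X : Scheme.{u}} (L : LineBundle X)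

/-- The opens over which a line bundle has a generator. -/
def genOpens : LowerSet X.Opens where
  carrier := {V | ∃ e : V.toScheme ⟶ L.tot, e ≫ L.π = V.ι ∧ L.IsGenerator e}
  lower' := by
    rintro W V hVW ⟨e, heπ, he⟩
    exact ⟨X.homOfLE hVW ≫ e, by rw [Category.assoc, heπ, X.homOfLE_ι], he.comp _⟩

variable {L} {T : Scheme.{u}} {V W : L.genOpens}

/-- The pullback along `v` of a chosen generator over `V`. -/
def gen (v : T ⟶ V.1.toScheme) : T ⟶ L.tot :=
  v ≫ V.2.choose

theorem gen_π (v : T ⟶ V.1.toScheme) : gen v ≫ L.π = v ≫ V.1.ι := by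
  rw [gen, Category.assoc, V.2.choose_spec.1]

theorem isGenerator_gen (v : T ⟶ V.1.toScheme) : L.IsGenerator (gen v) :=
  V.2.choose_spec.2.comp v

theorem comp_gen {T' : Scheme.{u}} (t : T' ⟶ T) (v : T ⟶ V.1.toScheme) :
    t ≫ gen v = gen (t ≫ v) :=
  (Category.assoc _ _ _).symm

/-- The coefficient of `a` with respect to the chosen generator. -/
def genCoeff (v : T ⟶ V.1.toScheme) (a : T ⟶ L.tot) (h : a ≫ L.π = v ≫ V.1.ι) : Γ(T, ⊤) :=
  (isGenerator_gen v).coeff a (h.trans (gen_π v).symm)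

theorem appTop_genCoeff {T' : Scheme.{u}} (t : T' ⟶ T) (v : T ⟶ V.1.toScheme) (a : T ⟶ L.tot)
    (h h') : t.appTop (genCoeff v a h) = genCoeff (t ≫ v) (t ≫ a) h' := by
  rw [eq_comm, genCoeff, IsGenerator.coeff_eq_iff, ← comp_gen, ← L.smul_natural, genCoeff,
    IsGenerator.smul_coeff]

theorem genCoeff_mul_genCoeff (v : T ⟶ V.1.toScheme) (w : T ⟶ W.1.toScheme) (a : T ⟶ L.tot)
    (h hv hw) : genCoeff v (gen w) h * genCoeff w a hw = genCoeff v a hv :=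
  IsGenerator.coeff_mul_coeff _ _ _ _ _ _

variable (L) in
/-- The `m`-th power of the cocycle of a line bundle. -/
def powCocycle (m : ℕ) : LineCocycle X where
  opens := L.genOpens
  exists_mem x := by
    obtain ⟨V, hxV, e, heπ, he⟩ := L.exists_isGenerator (𝟙 X) x
    exact ⟨V, ⟨e, by rw [heπ, Category.comp_id], he⟩, hxV⟩
  g v w h := genCoeff v (gen w) ((gen_π w).trans h.symm) ^ m
  g_self v := by rw [genCoeff, IsGenerator.coeff_self, one_pow]
  g_mul_g u v w h h' := by rw [← mul_pow, genCoeff_mul_genCoeff]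
  appTop_g t V W v w h h' := by
    simp only [map_pow, ← comp_gen]
    rw [appTop_genCoeff]

theorem exists_comp_eq_genCoeff_pow_smul (L : LineBundle X) (m : ℕ) :
    ∃ (N : LineBundle X) (P : L.tot ⟶ N.tot)
      (e : ∀ {T : Scheme.{u}} {V : L.genOpens}, (T ⟶ V.1.toScheme) → (T ⟶ N.tot)),
      P ≫ N.π = L.π ∧ ∀ {T : Scheme.{u}} {V : L.genOpens} (v : T ⟶ V.1.toScheme),
        N.IsGenerator (e v) ∧ ∀ (a : T ⟶ L.tot) (h), a ≫ P = N.smul (genCoeff v a h ^ m) (e v) := by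
  obtain ⟨P, hPπ, hP⟩ := (L.powCocycle m).exists_comp_eq_smul_frame L.π
    (fun {_} V a v h => genCoeff (L := L) (V := V) v a h ^ m)
    (fun s t v h h' => (map_pow _ _ _).trans (congrArg (· ^ m) (appTop_genCoeff _ _ _ _ _)))
    (fun t v w hv hw h => (mul_pow _ _ _).symm.trans
      (congrArg (· ^ m) (genCoeff_mul_genCoeff _ _ _ _ _ _)))
  refine ⟨_, P, fun {_ V} v => (L.powCocycle m).frame (V := V) v, hPπ,
    fun {_ V} v => ⟨?_, ?_⟩⟩
  · exact LineCocycle.isGenerator_frame (C := L.powCocycle m) (V := V) v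
  · exact fun a h => hP (V := V) a v h

theorem exists_genCoeff_lift {T : Scheme.{u}} (a : T ⟶ L.tot) (y : T) :
    ∃ U : T.Opens, y ∈ U ∧ ∃ (V : L.genOpens) (v : U.toScheme ⟶ V.1.toScheme),
      (U.ι ≫ a) ≫ L.π = v ≫ V.1.ι := by
  obtain ⟨U, hyU, V, v, hv⟩ := (L.powCocycle 1).exists_lift (a ≫ L.π) y
  exact ⟨U, hyU, V, v, by rw [Category.assoc, hv]⟩

theorem exists_isPower (L : LineBundle X) (m : ℕ) :
    ∃ N : LineBundle X, IsPower L.toVecBundleData m N.toVecBundleData := by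
  obtain ⟨N, P, g, hPπ, hP⟩ := L.exists_comp_eq_genCoeff_pow_smul m
  refine ⟨N, P, hPπ, fun {T} f a => hom_ext_of_local fun y => ?_,
    fun {T e} he => .of_local fun y => ?_⟩
  · obtain ⟨U, hyU, V, v, hv⟩ := exists_genCoeff_lift a y
    have hv' : L.smul (U.ι.appTop f) (U.ι ≫ a) ≫ L.π = v ≫ V.1.ι := by rw [L.smul_π, hv]
    have hcoeff : genCoeff v (L.smul (U.ι.appTop f) (U.ι ≫ a)) hv' ^ m =
        U.ι.appTop (f ^ m) * genCoeff v (U.ι ≫ a) hv ^ m := by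
      rw [genCoeff, IsGenerator.coeff_smul, mul_pow, map_pow, genCoeff]
    refine ⟨U, hyU, ?_⟩
    rw [← Category.assoc, L.smul_natural, (hP v).2 _ hv', hcoeff, N.mul_smul, ← (hP v).2 _ hv,
      N.smul_natural, Category.assoc]
  · obtain ⟨U, hyU, V, v, hv⟩ := exists_genCoeff_lift e y
    have hunit : IsUnit (genCoeff v (U.ι ≫ e) hv ^ m) :=
      (IsGenerator.isUnit_coeff _ (he.comp U.ι) _).pow m
    refine ⟨U, hyU, ?_⟩
    rw [← Category.assoc, (hP v).2 _ hv]
    exact (hP v).1.smul_isUnit hunit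

end LineBundle

theorem IsPower.isTensorPow {X : Scheme.{u}} {L N : LineBundle X} {m : ℕ}
    (h : IsPower L.toVecBundleData m N.toVecBundleData) : IsTensorPow L m N := by
  induction m generalizing N with
  | zero => exact h.isTrivialBundle
  | succ m ih =>
    obtain ⟨M, P, hP⟩ := L.exists_isPower m
    obtain ⟨P', hP'⟩ := h
    exact ⟨M, ih ⟨P, hP⟩, hP.isTensor hP'⟩

/-! ### Frobenius pullbacks and ampleness -/

theorem IsPullbackMap.isPower_of_isAbsoluteFrobenius {X : Scheme.{u}} {p : ℕ} [Fact p.Prime]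
    (hp : (p : Γ(X, ⊤)) = 0) {n : ℕ} {F : X ⟶ X} (hF : IsAbsoluteFrobenius X (p ^ n) F)
    {L N : VecBundleData X} {τ} (H : IsPullbackMap F L N τ) : IsPower L (p ^ n) N := by
  have hfrob {T : Scheme.{u}} (t : T ⟶ X) : ∃ G : T ⟶ T, IsAbsoluteFrobenius T (p ^ n) G :=
    exists_isAbsoluteFrobenius (by rw [← map_natCast t.appTop.hom, hp, map_zero]) n
  obtain ⟨G, hG⟩ := hfrob L.π
  obtain ⟨P, hPτ, hPπ⟩ : ∃ P, P ≫ τ = G ∧ P ≫ N.π = L.π :=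
    ⟨H.isPullback.lift G L.π (hG.naturality hF L.π).symm, H.isPullback.lift_fst _ _ _,
      H.isPullback.lift_snd _ _ _⟩
  refine ⟨P, hPπ, fun f a => H.hom_ext ?_ ?_, fun {T e} he => ?_⟩
  · rw [Category.assoc, hPπ, L.smul_π, N.smul_π, Category.assoc, hPπ]
  · obtain ⟨G', hG'⟩ := hfrob (a ≫ L.π)
    rw [Category.assoc, hPτ, H.smul, Category.assoc, hPτ, hG'.naturality hG, hG'.naturality hG,
      L.smul_natural, hG'.appTop_apply]
  · obtain ⟨G', hG'⟩ := hfrob (e ≫ L.π)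
    rw [← H.isGenerator_iff, Category.assoc, hPτ, hG'.naturality hG]
    exact he.comp G'

theorem exists_specMap_comp_fromSpecResidueField {X Y : Scheme.{u}} (f : X ⟶ Y) {x : X} {y : Y}
    (h : f x = y) : ∃ α, Spec.map α ≫ Y.fromSpecResidueField y = X.fromSpecResidueField x ≫ f := by
  subst h
  exact ⟨_, f.SpecMap_residueFieldMap_fromSpecResidueField x⟩

theorem fromSpecResidueField_comp_eq_of_apply_eq {X S : Scheme.{u}} {π : S ⟶ X} {s s' : X ⟶ S}
    (hs : s ≫ π = 𝟙 X) (hs' : s' ≫ π = 𝟙 X) {x : X} (h : s x = s' x) :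
    X.fromSpecResidueField x ≫ s = X.fromSpecResidueField x ≫ s' := by
  obtain ⟨α, hα⟩ := exists_specMap_comp_fromSpecResidueField s (rfl : s x = s x)
  obtain ⟨β, hβ⟩ := exists_specMap_comp_fromSpecResidueField s' h.symm
  obtain ⟨γ, hγ⟩ := exists_specMap_comp_fromSpecResidueField π (x := s x) (y := x)
    (by rw [← Scheme.Hom.comp_apply, hs]; rfl)
  have hretract {δ} {t : X ⟶ S} (ht : t ≫ π = 𝟙 X)
      (hδ : Spec.map δ ≫ S.fromSpecResidueField (s x) = X.fromSpecResidueField x ≫ t) :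
      γ ≫ δ = 𝟙 _ := by
    apply Spec.map_injective
    rw [← cancel_mono (X.fromSpecResidueField x), Spec.map_comp, Category.assoc, hγ,
      reassoc_of% hδ, ht, Category.comp_id, Spec.map_id, Category.id_comp]
  have : IsIso γ := (ConcreteCategory.isIso_iff_bijective γ).mpr ⟨γ.hom.injective, fun z =>
    ⟨α z, α.hom.injective (ConcreteCategory.congr_hom (hretract hs hα) (α z))⟩⟩
  rw [← hα, ← hβ, (cancel_epi γ).mp ((hretract hs hα).trans (hretract hs' hβ).symm)]

theorem IsPullbackMap.apply_ne_zero_iff {Y X : Scheme.{u}} {g : Y ⟶ X} {E : VecBundleData X}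
    {F : VecBundleData Y} {τ : F.tot ⟶ E.tot} (H : IsPullbackMap g E F τ) {s : X ⟶ E.tot}
    (hs : s ≫ E.π = 𝟙 X) {t : Y ⟶ F.tot} (ht : t ≫ F.π = 𝟙 Y) (hts : t ≫ τ = g ≫ s) (y : Y) :
    t y ≠ F.zero y ↔ s (g y) ≠ E.zero (g y) := by
  refine not_congr ⟨fun h => ?_, fun h => ?_⟩
  · rw [← Scheme.Hom.comp_apply, ← Scheme.Hom.comp_apply, ← hts, ← H.zero_comp,
      Scheme.Hom.comp_apply, Scheme.Hom.comp_apply, h]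
  · have hx := fromSpecResidueField_comp_eq_of_apply_eq hs E.zero_π h
    have hy : Y.fromSpecResidueField y ≫ t = Y.fromSpecResidueField y ≫ F.zero := by
      refine H.hom_ext (by rw [Category.assoc, Category.assoc, ht, F.zero_π]) ?_
      rw [Category.assoc, Category.assoc, hts, H.zero_comp,
        ← Scheme.Hom.SpecMap_residueFieldMap_fromSpecResidueField_assoc, hx,
        Scheme.Hom.SpecMap_residueFieldMap_fromSpecResidueField_assoc]
    have hpoint (w : Y ⟶ F.tot) :
        w y = (Y.fromSpecResidueField y ≫ w) (IsLocalRing.closedPoint (Y.residueField y)) :=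
      (congrArg w (Y.fromSpecResidueField_apply _ _).symm).trans (Scheme.Hom.comp_apply _ _ _).symm
    rw [hpoint t, hpoint F.zero, hy]

theorem IsAmple.of_isAffineHom {Y X : Scheme.{u}} (g : Y ⟶ X) [IsAffineHom g] {L : LineBundle X}
    (hL : IsAmple L) {L' L₀ : LineBundle Y} (hL' : IsPullbackBundle g L L') {q : ℕ} (hq : 0 < q)
    (h₀ : IsPower L₀.toVecBundleData q L'.toVecBundleData) : IsAmple L₀ := by
  obtain ⟨_, _, h⟩ := hL
  obtain ⟨τ, H⟩ := isPullbackBundle_iff.mp hL'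
  refine ⟨QuasiCompact.compactSpace_of_compactSpace g, quasiSeparatedSpace_of_quasiSeparated g,
    fun y => ?_⟩
  obtain ⟨m, hm, N, hN, s, hs, U, hU, hyU, hUs⟩ := h (g y)
  obtain ⟨N', hN'⟩ := LineBundle.exists_isPullbackBundle g N
  obtain ⟨τN, HN⟩ := isPullbackBundle_iff.mp hN'
  obtain ⟨t, hts, ht⟩ : ∃ t, t ≫ τN = g ≫ s ∧ t ≫ N'.π = 𝟙 Y :=
    ⟨HN.isPullback.lift (g ≫ s) (𝟙 Y) (by simp [hs]), HN.isPullback.lift_fst _ _ _,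
      HN.isPullback.lift_snd _ _ _⟩
  refine ⟨q * m, Nat.mul_pos hq hm, N', (h₀.trans (hN.isPower.baseChange H HN)).isTensorPow,
    t, ht, g ⁻¹ᵁ U, hU.preimage g, hyU, Set.ext fun z => ?_⟩
  exact (Set.ext_iff.mp hUs (g z)).trans (HN.apply_ne_zero_iff hs ht hts z).symm

theorem isHomeomorph_of_comp_apply_eq {X Q : Scheme.{u}} (φ : X ⟶ Q) [Surjective φ] (ρ : Q ⟶ X)
    (h : ∀ x, ρ (φ x) = x) : IsHomeomorph φ ∧ IsHomeomorph ρ := by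
  let e : X ≃ₜ Q :=
    { toFun := φ
      invFun := ρ
      left_inv := h
      right_inv := Function.LeftInverse.rightInverse_of_surjective h φ.surjective }
  exact ⟨e.isHomeomorph, e.symm.isHomeomorph⟩

theorem quotient_line_bundle_power_general {X Q : Scheme.{u}} {p : ℕ} [Fact p.Prime]
    (hp : (p : Γ(X, ⊤)) = 0) {n : ℕ} {F : X ⟶ X} (hF : IsAbsoluteFrobenius X (p ^ n) F)
    (φ : X ⟶ Q) [Surjective φ] (ρ : Q ⟶ X) (hφρ : φ ≫ ρ = F) {L : LineBundle X}
    {M : LineBundle Q} (hM : IsPullbackBundle ρ L M) :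
    (∃ PM : LineBundle X, IsPullbackBundle φ M PM ∧
      ∃ LP : LineBundle X, IsTensorPow L (p ^ n) LP ∧ VBIso PM LP) ∧
    (IsAmple L ↔ IsAmple M) := by
  obtain ⟨hφ, hρ⟩ := isHomeomorph_of_comp_apply_eq φ ρ fun x => by
    rw [← Scheme.Hom.comp_apply, hφρ]
    exact hF.1 x
  have := isAffineHom_of_isHomeomorph φ hφ
  have := isAffineHom_of_isHomeomorph ρ hρ
  obtain ⟨PM, hPM⟩ := LineBundle.exists_isPullbackBundle φ M
  obtain ⟨τ, H⟩ := isPullbackBundle_iff.mp (hφρ ▸ hM.trans hPM)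
  have hpow : IsPower L.toVecBundleData (p ^ n) PM.toVecBundleData :=
    H.isPower_of_isAbsoluteFrobenius hp hF
  refine ⟨⟨PM, hPM, PM, hpow.isTensorPow, 𝟙 _, ?_, inferInstance⟩, fun h => ?_, fun h => ?_⟩
  · simp [IsLinearHom]
  · exact h.of_isAffineHom ρ hM one_pos (.refl _)
  · exact h.of_isAffineHom φ hPM (pow_pos (Fact.out : p.Prime).pos n) hpow

/-- In the situation of the quotient of `X` by an infinitesimal group
scheme `I` and the factorization `ψ : X/I ⟶ X^{(pⁿ)}` of the `n`-th relative Frobenius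
(`n ≥ h(I)`): for a line bundle `L` on `X`, the line bundle `M := ψ^*(L^{(pⁿ)})` on `X/I`
satisfies `φ^*(M) ≅ L^{⊗ pⁿ}`; moreover `L` is ample if and only if `M` is ample. -/
theorem quotient_line_bundle_power
    {k : Type u} [Field k] (p : ℕ) [Fact p.Prime] [CharP k p]
    (I : GroupSchemeOver k) (hI : I.IsInfinitesimal)
    (X : SchemeOver k) (hXft : X.IsFiniteType) (α : ActionOver I X)
    (n : ℕ) (hn : 0 < n) (hheight : FrobKillsAt k p I n)
    (Q : SchemeOver k) (φ : X.carrier ⟶ Q.carrier) (hquot : IsCatQuotient α Q φ)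
    (FD : FrobeniusData k p n X)
    (ψ : Q.carrier ⟶ FD.tw.carrier) (hψ : φ ≫ ψ = FD.rel)
    (L : LineBundle X.carrier)
    (Ltw : LineBundle FD.tw.carrier) (hLtw : IsPullbackBundle FD.pr L Ltw)
    (M : LineBundle Q.carrier) (hM : IsPullbackBundle ψ Ltw M) :
    (∃ PM : LineBundle X.carrier, IsPullbackBundle φ M PM ∧
      ∃ LP : LineBundle X.carrier, IsTensorPow L (p ^ n) LP ∧ VBIso PM LP) ∧
    (IsAmple L ↔ IsAmple M) := by
  have := hquot.surjective hψ
  exact quotient_line_bundle_power_general (natCast_eq_zero_of_over X.str p) FD.abs_frob φ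
    (ψ ≫ FD.pr) (by rw [reassoc_of% hψ, FD.rel_pr]) (hLtw.trans hM)
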